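/- arXiv:1207.4437 — 3 statements merged into one kernel-verified Lean document; each statement's English description precedes it below -/
import Mathlib

section
/- For every n ≥ 2, every index 1 ≤ i ≤ n−1, and all integers k_1,…,k_{i−1}, m, k_{i+2},…,k_n, the polynomial α satisfies α(n; k_1,…,k_{i−1}, m, m+1, k_{i+2},…,k_n) = α(n; k_1,…,k_{i−1}, m, m, k_{i+2},…,k_n) + α(n; k_1,…,k_{i−1}, m+1, m+1, k_{i+2},…,k_n). -/
/-- A triangular array of size `n`, encoded as a function `ℕ → ℕ → ℤ` whose
meaningful entries are `a i j` for `1 ≤ j ≤ i ≤ n` (row `i` has entries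
`a i 1, …, a i i`), normalized to be `0` outside this region. -/
def IsTri (n : ℕ) (a : ℕ → ℕ → ℤ) : Prop :=
  ∀ i j, ¬ (1 ≤ j ∧ j ≤ i ∧ i ≤ n) → a i j = 0

/-- A Monotone Triangle of size `n`: strict increase along rows and weak
increase along North-East and South-East diagonals. -/
def IsMT (n : ℕ) (a : ℕ → ℕ → ℤ) : Prop :=
  IsTri n a ∧
  (∀ i j, 1 ≤ j → j + 1 ≤ i → i ≤ n → a i j < a i (j + 1)) ∧
  (∀ i j, 1 ≤ j → j ≤ i → i + 1 ≤ n →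
    a (i + 1) j ≤ a i j ∧ a i j ≤ a (i + 1) (j + 1))

/-- A Generalized Monotone Triangle (GMT) of size `n`. -/
def IsGMT (n : ℕ) (a : ℕ → ℕ → ℤ) : Prop :=
  IsTri n a ∧
  -- (1) each entry is weakly bounded by its SW- and SE-neighbour
  (∀ i j, 1 ≤ j → j ≤ i → i + 1 ≤ n →
    min (a (i + 1) j) (a (i + 1) (j + 1)) ≤ a i j ∧
    a i j ≤ max (a (i + 1) j) (a (i + 1) (j + 1))) ∧
  -- (2) three weakly increasing consecutive entries force strict increase above
  (∀ i j, 1 ≤ j → j + 1 ≤ i → i + 1 ≤ n →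
    a (i + 1) j ≤ a (i + 1) (j + 1) → a (i + 1) (j + 1) ≤ a (i + 1) (j + 2) →
    a i j < a i (j + 1)) ∧
  -- (3) equality over a strict descent forces an equal neighbour
  (∀ i j, 1 ≤ j → j ≤ i → i + 1 ≤ n →
    (a i j = a (i + 1) j → a (i + 1) (j + 1) < a (i + 1) j →
      2 ≤ j ∧ a i (j - 1) = a i j) ∧
    (a (i + 1) (j + 1) < a (i + 1) j → a (i + 1) (j + 1) = a i j →
      j + 1 ≤ i ∧ a i (j + 1) = a i j))

/-- The bottom row of a triangular array of size `n` is `(k 0, …, k (n-1))`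
(1-indexed in the array). -/
def BottomRow (n : ℕ) (a : ℕ → ℕ → ℤ) (k : Fin n → ℤ) : Prop :=
  ∀ j : Fin n, a n (j.1 + 1) = k j

/-- The set of Monotone Triangles of size `n` with bottom row `k`. -/
def MTset (n : ℕ) (k : Fin n → ℤ) : Set (ℕ → ℕ → ℤ) :=
  {a | IsMT n a ∧ BottomRow n a k}

/-- The set `𝒢ₙ(k)` of Generalized Monotone Triangles of size `n` with bottom row `k`. -/
def GMTset (n : ℕ) (k : Fin n → ℤ) : Set (ℕ → ℕ → ℤ) :=
  {a | IsGMT n a ∧ BottomRow n a k}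

/-- The positions `(i, j)` of newcomers of a triangular array:
`a (i+1) j > a i j > a (i+1) (j+1)`. -/
def newcomersF (n : ℕ) (a : ℕ → ℕ → ℤ) : Finset (ℕ × ℕ) :=
  ((Finset.range (n + 1)) ×ˢ (Finset.range (n + 1))).filter (fun p =>
    1 ≤ p.2 ∧ p.2 ≤ p.1 ∧ p.1 + 1 ≤ n ∧
    a p.1 p.2 < a (p.1 + 1) p.2 ∧ a (p.1 + 1) (p.2 + 1) < a p.1 p.2)

/-- The positions `(i, j)` of sign-changing pairs `(a i j, a i (j+1))` of a
triangular array: two equal consecutive entries whose interlaced neighbour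
below is also equal to them. -/
def scPairsF (n : ℕ) (a : ℕ → ℕ → ℤ) : Finset (ℕ × ℕ) :=
  ((Finset.range (n + 1)) ×ˢ (Finset.range (n + 1))).filter (fun p =>
    1 ≤ p.2 ∧ p.2 + 1 ≤ p.1 ∧ p.1 + 1 ≤ n ∧
    a p.1 p.2 = a p.1 (p.2 + 1) ∧ a (p.1 + 1) (p.2 + 1) = a p.1 p.2)

/-- `sc(A)`: the total number of newcomers and sign-changing pairs of `A`. -/
def scT (n : ℕ) (a : ℕ → ℕ → ℤ) : ℕ :=
  (newcomersF n a).card + (scPairsF n a).card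

/-- `IsAlpha N f` asserts that `f` is the polynomial function
`α(N; k₁, …, k_N)`: it is given by a polynomial with rational coefficients of
degree at most `N - 1` in each variable, and its value at every strictly
increasing integer sequence equals the number of Monotone Triangles with that
bottom row. -/
def IsAlpha (N : ℕ) (f : (Fin N → ℤ) → ℚ) : Prop :=
  (∃ P : MvPolynomial (Fin N) ℚ, (∀ i : Fin N, P.degreeOf i ≤ N - 1) ∧
    ∀ k : Fin N → ℤ, f k = MvPolynomial.eval (fun i => (k i : ℚ)) P) ∧
  (∀ k : Fin N → ℤ, StrictMono k → f k = ((MTset N k).ncard : ℚ))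

/-!
Summing over the row above the bottom row expresses `α(n + 1; k)` as the sum of `α(n; l)` over the
strictly increasing `l` interlacing `k`. When the ranges of summation are read as signed sums, the
sum makes sense for arbitrary `k`, and it is polynomial in `k` because a signed sum of a polynomial
is polynomial in the endpoints. A polynomial is determined by its values at strictly increasing
sequences, so `α` obeys this recursion everywhere.

If a function `A` of the upper row vanishes on sequences containing `m, m, m`, then its interlacing
sum both vanishes on such sequences and satisfies the pair identity. In both cases the obstruction
is the sum of `A (m, l)` over the `l` interlacing `(m + 1, m, v)`, which comes from the entries
preceding the equal or consecutive ones, and this sum telescopes to values of `A` at `m, m, m`.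
-/

section SignedSum

variable {M : Type*} [AddCommGroup M]

/-- The oriented sum of `f` from `a` (included) to `b` (excluded), negated when `b < a`: a discrete
analogue of the interval integral `∫ x in a..b, f x`. -/
noncomputable def signedSum (f : ℤ → M) (a b : ℤ) : M :=
  ∑ x ∈ Finset.Ico a b, f x - ∑ x ∈ Finset.Ico b a, f x

@[simp]
lemma signedSum_self (f : ℤ → M) (a : ℤ) : signedSum f a a = 0 := by
  simp [signedSum]

lemma neg_signedSum (f : ℤ → M) (a b : ℤ) : -signedSum f a b = signedSum f b a := by
  simp [signedSum]

lemma signedSum_of_le (f : ℤ → M) {a b : ℤ} (hab : a ≤ b) :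
    signedSum f a b = ∑ x ∈ Finset.Ico a b, f x := by
  simp [signedSum, hab]

lemma signedSum_zero (a b : ℤ) : signedSum (fun _ => (0 : M)) a b = 0 := by
  simp [signedSum]

lemma signedSum_add (f g : ℤ → M) (a b : ℤ) :
    signedSum (fun x => f x + g x) a b = signedSum f a b + signedSum g a b := by
  simp only [signedSum, Finset.sum_add_distrib]
  abel

lemma signedSum_const_mul {R : Type*} [NonUnitalNonAssocRing R] (c : R) (f : ℤ → R) (a b : ℤ) :
    signedSum (fun x => c * f x) a b = c * signedSum f a b := by
  simp only [signedSum, ← Finset.mul_sum, mul_sub]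

lemma signedSum_add_one_right (f : ℤ → M) (a b : ℤ) :
    signedSum f a (b + 1) = signedSum f a b + f b := by
  rcases le_or_gt a b with h | h
  · rw [signedSum_of_le f h, signedSum_of_le f (h.trans (Int.le_add_one le_rfl)),
      ← Finset.insert_Ico_right_eq_Ico_add_one h, Finset.sum_insert (by simp), add_comm]
  · rw [← neg_signedSum f (b + 1), ← neg_signedSum f b, signedSum_of_le f h.le, signedSum_of_le f h,
      ← Finset.insert_Ico_add_one_left_eq_Ico h, Finset.sum_insert (by simp)]
    abel

lemma signedSum_add_one_left (f : ℤ → M) (a b : ℤ) :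
    signedSum f (a + 1) b = signedSum f a b - f a := by
  rw [← neg_signedSum, signedSum_add_one_right, ← neg_signedSum f b a]
  abel

lemma signedSum_fwdDiff (F : ℤ → M) (a b : ℤ) : signedSum (fwdDiff 1 F) a b = F b - F a := by
  induction b using Int.inductionOn' (b := a) with
  | zero => simp
  | succ k _ ih => rw [signedSum_add_one_right, ih, fwdDiff]; abel
  | pred k _ ih =>
    have h := signedSum_add_one_right (fwdDiff 1 F) a (k - 1)
    rw [fwdDiff, sub_add_cancel, ih] at h
    rw [← sub_eq_iff_eq_add.2 h]
    abel

lemma signedSum_pow (k : ℕ) (a b : ℤ) :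
    signedSum (fun t => (t : ℚ) ^ k) a b =
      ((Polynomial.bernoulli (k + 1)).eval (b : ℚ) - (Polynomial.bernoulli (k + 1)).eval (a : ℚ)) /
        (k + 1) := by
  have hB : fwdDiff 1 (fun t : ℤ => (Polynomial.bernoulli (k + 1)).eval (t : ℚ) / (k + 1)) =
      fun t : ℤ => (t : ℚ) ^ k := by
    ext t
    have hk : (k : ℚ) + 1 ≠ 0 := k.cast_add_one_ne_zero
    rw [fwdDiff, Int.cast_add, Int.cast_one, add_comm (t : ℚ), Polynomial.bernoulli_eval_one_add]
    push_cast
    field_simp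
    simp
  rw [← hB, signedSum_fwdDiff, sub_div]

end SignedSum

section InterlacingSum

variable {M : Type*} [AddCommGroup M]

/-- The sum of `A l` over the strictly increasing sequences `l` interlacing `k` (see
`interlacingSum_eq_sum`), continued to arbitrary `k` by means of signed sums. The second summand
collects the `l` starting with `b`, whose next entry must exceed `b`. -/
noncomputable def interlacingSum : List ℤ → (List ℤ → M) → M
  | [], _ => 0
  | [_], A => A []
  | a :: b :: r, A =>
    signedSum (fun x => interlacingSum (b :: r) fun l => A (x :: l)) a b +
      interlacingSum ((b + 1) :: r) fun l => A (b :: l)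
termination_by k => k.length

@[simp]
lemma interlacingSum_nil (A : List ℤ → M) : interlacingSum [] A = 0 := by
  rw [interlacingSum]

@[simp]
lemma interlacingSum_singleton (a : ℤ) (A : List ℤ → M) : interlacingSum [a] A = A [] := by
  rw [interlacingSum]

lemma interlacingSum_cons_cons (a b : ℤ) (r : List ℤ) (A : List ℤ → M) :
    interlacingSum (a :: b :: r) A =
      signedSum (fun x => interlacingSum (b :: r) fun l => A (x :: l)) a b +
        interlacingSum ((b + 1) :: r) fun l => A (b :: l) := by
  rw [interlacingSum]

lemma interlacingSum_zero (k : List ℤ) : interlacingSum k (fun _ => (0 : M)) = 0 := by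
  rcases k with - | ⟨a, r⟩
  · exact interlacingSum_nil _
  induction r generalizing a with
  | nil => exact interlacingSum_singleton _ _
  | cons b r ih => simp only [interlacingSum_cons_cons, ih, signedSum_zero, add_zero]

lemma interlacingSum_self_cons (m : ℤ) (v : List ℤ) (A : List ℤ → M) :
    interlacingSum (m :: m :: v) A = interlacingSum ((m + 1) :: v) fun l => A (m :: l) := by
  rw [interlacingSum_cons_cons, signedSum_self, zero_add]

lemma interlacingSum_add_one_cons (a b : ℤ) (r : List ℤ) (A : List ℤ → M) :
    interlacingSum ((a + 1) :: b :: r) A =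
      interlacingSum (a :: b :: r) A - interlacingSum (b :: r) fun l => A (a :: l) := by
  rw [interlacingSum_cons_cons, interlacingSum_cons_cons, signedSum_add_one_left]
  abel

/-- `A` vanishes on sequences with three equal consecutive entries. -/
def VanishesOnTriples (A : List ℤ → M) : Prop :=
  ∀ (u v : List ℤ) (m : ℤ), A (u ++ m :: m :: m :: v) = 0

/-- `A (…, m, m + 1, …) = A (…, m, m, …) + A (…, m + 1, m + 1, …)` at any two adjacent positions:
the identity to be proved for `α`. -/
def PairIdentity (A : List ℤ → M) : Prop :=
  ∀ (u v : List ℤ) (m : ℤ), A (u ++ m :: (m + 1) :: v) =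
    A (u ++ m :: m :: v) + A (u ++ (m + 1) :: (m + 1) :: v)

lemma VanishesOnTriples.cons {A : List ℤ → M} (hA : VanishesOnTriples A) (x : ℤ) :
    VanishesOnTriples fun l => A (x :: l) :=
  fun u v m => hA (x :: u) v m

lemma VanishesOnTriples.interlacingSum_add_one_self_cons {A : List ℤ → M}
    (hA : VanishesOnTriples A) (m : ℤ) (v : List ℤ) :
    interlacingSum ((m + 1) :: m :: v) (fun l => A (m :: l)) = 0 := by
  have hA₀ : ∀ l, A (m :: m :: m :: l) = 0 := fun l => hA [] l m
  rw [interlacingSum_add_one_cons, interlacingSum_self_cons]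
  cases v with
  | nil => simp
  | cons c w => simp [interlacingSum_add_one_cons, hA₀, interlacingSum_zero]

lemma VanishesOnTriples.interlacingSum_triple_cons {A : List ℤ → M} (hA : VanishesOnTriples A)
    (m : ℤ) (v : List ℤ) : interlacingSum (m :: m :: m :: v) A = 0 := by
  rw [interlacingSum_self_cons, hA.interlacingSum_add_one_self_cons]

lemma VanishesOnTriples.interlacingSum {A : List ℤ → M} (hA : VanishesOnTriples A) :
    VanishesOnTriples (interlacingSum · A) := by
  intro u v m
  rcases u with - | ⟨a, u⟩
  · exact hA.interlacingSum_triple_cons m v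
  induction u generalizing a A with
  | nil =>
    simp only [List.cons_append, List.nil_append, interlacingSum_cons_cons a,
      (hA.cons _).interlacingSum_triple_cons, hA.interlacingSum_add_one_self_cons, signedSum_zero,
      add_zero]
  | cons b u ih =>
    simp only [List.cons_append] at ih ⊢
    simp only [interlacingSum_cons_cons a b, ih (hA.cons _), signedSum_zero, add_zero]

lemma interlacingSum_self_add_one_cons (m : ℤ) (v : List ℤ) (A : List ℤ → M) :
    interlacingSum (m :: (m + 1) :: v) A =
      interlacingSum (m :: m :: v) A + interlacingSum ((m + 1) :: (m + 1) :: v) A := by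
  rw [interlacingSum_self_cons, interlacingSum_self_cons, interlacingSum_cons_cons,
    signedSum_add_one_right, signedSum_self, zero_add]

lemma VanishesOnTriples.pairIdentity_interlacingSum {A : List ℤ → M} (hA : VanishesOnTriples A) :
    PairIdentity (_root_.interlacingSum · A) := by
  intro u v m
  rcases u with - | ⟨a, u⟩
  · exact interlacingSum_self_add_one_cons m v A
  induction u generalizing a A with
  | nil =>
    simp only [List.cons_append, List.nil_append, interlacingSum_cons_cons a,
      hA.interlacingSum_add_one_self_cons, interlacingSum_self_add_one_cons, signedSum_add,
      signedSum_add_one_right]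
    abel
  | cons b u ih =>
    simp only [List.cons_append] at ih ⊢
    simp only [interlacingSum_cons_cons a b, ih (hA.cons _), signedSum_add]
    abel

end InterlacingSum

section Polynomiality

variable {X : Type*}

lemma polynomial_eval_mem {R : Type*} [CommSemiring R] {S : Subalgebra R (X → R)} {f : X → R}
    (hf : f ∈ S) (P : Polynomial R) : (fun x => P.eval (f x)) ∈ S := by
  have h : (fun x => P.eval (f x)) = P.aeval (⟨f, hf⟩ : S) := by
    ext x
    rw [Polynomial.aeval_subalgebra_coe, Polynomial.aeval_fn_apply, Polynomial.coe_aeval_eq_eval]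
  exact h ▸ SetLike.coe_mem _

lemma mvPolynomial_eval_mem {R σ : Type*} [CommSemiring R] {S : Subalgebra R (X → R)}
    {f : σ → X → R} (hf : ∀ i, f i ∈ S) (P : MvPolynomial σ R) :
    (fun x => MvPolynomial.eval (f · x) P) ∈ S := by
  induction P using MvPolynomial.induction_on with
  | C c => simp only [MvPolynomial.eval_C]; exact S.algebraMap_mem c
  | add P Q hP hQ => simp only [map_add]; exact S.add_mem hP hQ
  | mul_X P i hP => simp only [map_mul, MvPolynomial.eval_X]; exact S.mul_mem hP (hf i)

/-- The algebra of the functions `(x, t) ↦ Q x t` that are polynomial in the integer `t` with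
coefficients in the algebra `S` of functions of `x`. It serves to introduce a summation variable. -/
noncomputable def adjoinIntVariable {R : Type*} [CommRing R] (S : Subalgebra R (X → R)) :
    Subalgebra R (X × ℤ → R) :=
  (Polynomial.aevalTower
    ((AlgHom.pi fun y : X × ℤ => Pi.evalAlgHom R (fun _ : X => R) y.1).comp S.val)
    fun y => (y.2 : R)).range

lemma comp_fst_mem_adjoinIntVariable {R : Type*} [CommRing R] {S : Subalgebra R (X → R)}
    {f : X → R} (hf : f ∈ S) : (fun y => f y.1) ∈ adjoinIntVariable S :=
  AlgHom.mem_range _ |>.2 ⟨Polynomial.C ⟨f, hf⟩, by ext; simp⟩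

lemma intCast_snd_mem_adjoinIntVariable {R : Type*} [CommRing R] {S : Subalgebra R (X → R)} :
    (fun y => (y.2 : R)) ∈ adjoinIntVariable S :=
  AlgHom.mem_range _ |>.2 ⟨Polynomial.X, by ext; simp⟩

lemma signedSum_mem {S : Subalgebra ℚ (X → ℚ)} {F : X × ℤ → ℚ} (hF : F ∈ adjoinIntVariable S)
    {a b : X → ℤ} (ha : (fun x => (a x : ℚ)) ∈ S) (hb : (fun x => (b x : ℚ)) ∈ S) :
    (fun x => signedSum (fun t => F (x, t)) (a x) (b x)) ∈ S := by
  obtain ⟨Q, rfl⟩ := AlgHom.mem_range _ |>.1 hF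
  clear hF
  induction Q using Polynomial.induction_on' with
  | add P Q hP hQ =>
    convert S.add_mem hP hQ using 1
    ext x
    simp [signedSum_add]
  | monomial k c =>
    have hB {f : X → ℤ} (hf : (fun x => (f x : ℚ)) ∈ S) :=
      polynomial_eval_mem hf (Polynomial.bernoulli (k + 1))
    convert S.mul_mem c.2 (S.smul_mem (S.sub_mem (hB hb) (hB ha)) ((k + 1 : ℚ)⁻¹)) using 1
    ext x
    simp [← Polynomial.C_mul_X_pow_eq_monomial, signedSum_const_mul, signedSum_pow,
      div_eq_inv_mul]

/-- `A` is a polynomial function of the entries on the lists of each fixed length. This is expressed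
by closure: applied to functions in a `ℚ`-algebra `S`, it yields a function in `S`. -/
def IsPolynomialOnLists (A : List ℤ → ℚ) : Prop :=
  ∀ ⦃X : Type⦄ (S : Subalgebra ℚ (X → ℚ)) (l : List (X → ℤ)),
    (∀ f ∈ l, (fun x => (f x : ℚ)) ∈ S) → (fun x => A (l.map (· x))) ∈ S

lemma IsPolynomialOnLists.interlacingSum_append {A : List ℤ → ℚ} (hA : IsPolynomialOnLists A)
    {X : Type} {S : Subalgebra ℚ (X → ℚ)} {l p : List (X → ℤ)}
    (hl : ∀ f ∈ l, (fun x => (f x : ℚ)) ∈ S) (hp : ∀ f ∈ p, (fun x => (f x : ℚ)) ∈ S) :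
    (fun x => interlacingSum (l.map (· x)) fun t => A (p.map (· x) ++ t)) ∈ S := by
  match l with
  | [] => simp only [List.map_nil, interlacingSum_nil]; exact S.zero_mem
  | [a] => simpa using hA S p hp
  | a :: b :: r =>
    simp only [List.forall_mem_cons] at hl
    obtain ⟨ha, hb, hr⟩ := hl
    simp only [List.map_cons, interlacingSum_cons_cons]
    refine S.add_mem (signedSum_mem (F := fun y => interlacingSum (b y.1 :: r.map (· y.1))
      fun l => A (p.map (· y.1) ++ y.2 :: l)) ?_ ha hb) ?_
    · have hlift {q : List (X → ℤ)} (hq : ∀ f ∈ q, (fun x => (f x : ℚ)) ∈ S) :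
          ∀ g ∈ q.map (· ∘ Prod.fst), (fun y => (g y : ℚ)) ∈ adjoinIntVariable S :=
        List.forall_mem_map.2 fun f hf => comp_fst_mem_adjoinIntVariable (hq f hf)
      have h := hA.interlacingSum_append (S := adjoinIntVariable S)
        (l := (b :: r).map (· ∘ Prod.fst)) (p := p.map (· ∘ Prod.fst) ++ [Prod.snd])
        (hlift (List.forall_mem_cons.2 ⟨hb, hr⟩))
        (List.forall_mem_append.2 ⟨hlift hp, by simpa using intCast_snd_mem_adjoinIntVariable⟩)
      simpa [Function.comp_def] using h
    · have hb₁ : (fun x => ((b x + 1 : ℤ) : ℚ)) ∈ S := by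
        simp only [Int.cast_add, Int.cast_one]
        exact S.add_mem hb S.one_mem
      have h := hA.interlacingSum_append (l := (fun x => b x + 1) :: r) (p := p ++ [b])
        (List.forall_mem_cons.2 ⟨hb₁, hr⟩)
        (List.forall_mem_append.2 ⟨hp, by simpa using hb⟩)
      simpa using h
termination_by l.length

lemma IsPolynomialOnLists.interlacingSum {A : List ℤ → ℚ} (hA : IsPolynomialOnLists A) :
    IsPolynomialOnLists (interlacingSum · A) :=
  fun _ _ _ hl => by simpa using hA.interlacingSum_append hl (p := []) (by simp)

end Polynomiality

section AlphaList

/-- The polynomial `α(n; ·)`, as a function on lists of length `n`. -/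
noncomputable def alphaList : ℕ → List ℤ → ℚ
  | 0, k => if k = [] then 1 else 0
  | n + 1, k => interlacingSum k (alphaList n)

lemma isPolynomialOnLists_alphaList (n : ℕ) : IsPolynomialOnLists (alphaList n) := by
  induction n with
  | zero =>
    intro X S l _
    simp only [alphaList, List.map_eq_nil_iff]
    exact S.algebraMap_mem (if l = [] then 1 else 0)
  | succ n ih => exact ih.interlacingSum

lemma vanishesOnTriples_alphaList (n : ℕ) : VanishesOnTriples (alphaList n) := by
  induction n with
  | zero => simp [VanishesOnTriples, alphaList]
  | succ n ih => exact ih.interlacingSum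

lemma pairIdentity_alphaList (n : ℕ) : PairIdentity (alphaList n) := by
  cases n with
  | zero => simp [PairIdentity, alphaList]
  | succ n => exact (vanishesOnTriples_alphaList n).pairIdentity_interlacingSum

end AlphaList

section Interlacers

/-- `l` is a strictly increasing sequence interlacing `k`, as a row of a Monotone Triangle above
the row `k`. -/
def Interlaces (k l : List ℤ) : Prop :=
  List.Forall₂ (· ≤ ·) k.dropLast l ∧ List.Forall₂ (· ≤ ·) l k.tail ∧ l.Pairwise (· < ·)

lemma interlaces_cons_cons_iff {a b x : ℤ} {r l : List ℤ} :
    Interlaces (a :: b :: r) (x :: l) ↔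
      a ≤ x ∧ x ≤ b ∧ (∀ y ∈ l, x < y) ∧ Interlaces (b :: r) l := by
  simp only [Interlaces, List.dropLast_cons_cons, List.tail_cons, List.forall₂_cons,
    List.pairwise_cons]
  tauto

lemma interlaces_add_one_cons_iff {b : ℤ} {r l : List ℤ} :
    Interlaces ((b + 1) :: r) l ↔ (∀ y ∈ l, b < y) ∧ Interlaces (b :: r) l := by
  rcases r with - | ⟨c, r⟩
  · simp +contextual [Interlaces]
  rcases l with - | ⟨x, l⟩
  · simp [Interlaces]
  simp only [interlaces_cons_cons_iff, List.forall_mem_cons, Int.add_one_le_iff]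
  exact ⟨fun ⟨hbx, hxc, hx, hl⟩ => ⟨⟨hbx, fun y hy => hbx.trans (hx y hy)⟩, hbx.le, hxc, hx, hl⟩,
    fun ⟨⟨hbx, _⟩, _, hxc, hx, hl⟩ => ⟨hbx, hxc, hx, hl⟩⟩

lemma Interlaces.le_of_mem {b y : ℤ} {r l : List ℤ} (h : Interlaces (b :: r) l) (hy : y ∈ l) :
    b ≤ y := by
  rcases r with - | ⟨c, r⟩
  · simp_all [Interlaces]
  rcases l with - | ⟨x, l⟩
  · simp at hy
  obtain ⟨hbx, -, hx, -⟩ := interlaces_cons_cons_iff.1 h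
  rcases List.mem_cons.1 hy with rfl | hy
  · exact hbx
  · exact hbx.trans (hx y hy).le

lemma Interlaces.length_add_one {a : ℤ} {r l : List ℤ} (h : Interlaces (a :: r) l) :
    (a :: r).length = l.length + 1 := by
  simpa using h.2.1.length_eq.symm

/-- The finite set of the sequences interlacing a given one (see `mem_interlacers`), enumerated by
the recursion of `interlacingSum`. -/
noncomputable def interlacers : List ℤ → Finset (List ℤ)
  | [] => ∅
  | [_] => {[]}
  | a :: b :: r =>
    (Finset.Ico a b).biUnion (fun x => (interlacers (b :: r)).image (x :: ·)) ∪
      (interlacers ((b + 1) :: r)).image (b :: ·)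
termination_by k => k.length

lemma mem_interlacers_cons {a : ℤ} {r l : List ℤ} (ha : ∀ b ∈ r, a ≤ b) (hr : r.Pairwise (· < ·)) :
    l ∈ interlacers (a :: r) ↔ Interlaces (a :: r) l := by
  induction r generalizing a l with
  | nil => simp +contextual [interlacers, Interlaces]
  | cons b r ih =>
    obtain ⟨hb, hr⟩ := List.pairwise_cons.1 hr
    simp only [interlacers, Finset.mem_union, Finset.mem_biUnion, Finset.mem_image, Finset.mem_Ico,
      ih (fun c hc => (hb c hc).le) hr, ih (a := b + 1) hb hr]
    rcases l with - | ⟨x, l⟩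
    · simp [Interlaces]
    simp only [interlaces_cons_cons_iff, interlaces_add_one_cons_iff, List.cons.injEq]
    constructor
    · rintro (⟨_, ⟨hax, hxb⟩, _, hl, rfl, rfl⟩ | ⟨_, ⟨hbl, hl⟩, rfl, rfl⟩)
      · exact ⟨hax, hxb.le, fun y hy => hxb.trans_le (hl.le_of_mem hy), hl⟩
      · exact ⟨ha _ List.mem_cons_self, le_rfl, hbl, hl⟩
    · rintro ⟨hax, hxb, hxl, hl⟩
      rcases hxb.lt_or_eq with hxb | rfl
      · exact .inl ⟨x, ⟨hax, hxb⟩, l, hl, rfl, rfl⟩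
      · exact .inr ⟨l, ⟨hxl, hl⟩, rfl, rfl⟩

lemma mem_interlacers {a : ℤ} {r l : List ℤ} (hk : (a :: r).Pairwise (· < ·)) :
    l ∈ interlacers (a :: r) ↔ Interlaces (a :: r) l :=
  mem_interlacers_cons (fun _ hb => (List.rel_of_pairwise_cons hk hb).le) hk.of_cons

lemma interlacingSum_eq_sum {M : Type*} [AddCommGroup M] {a : ℤ} {r : List ℤ}
    (ha : ∀ b ∈ r, a ≤ b) (hr : r.Pairwise (· < ·)) (A : List ℤ → M) :
    interlacingSum (a :: r) A = ∑ l ∈ interlacers (a :: r), A l := by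
  induction r generalizing a A with
  | nil => simp [interlacers]
  | cons b r ih =>
    obtain ⟨hb, hr⟩ := List.pairwise_cons.1 hr
    have hdisj_fibers : (Finset.Ico a b : Set ℤ).PairwiseDisjoint
        fun x => (interlacers (b :: r)).image (x :: ·) := by
      intro x _ y _ hxy
      simp only [Function.onFun, Finset.disjoint_left, Finset.mem_image]
      rintro _ ⟨l, _, rfl⟩ ⟨l', _, h⟩
      exact hxy (List.cons.inj h).1.symm
    have hdisj_union : Disjoint
        ((Finset.Ico a b).biUnion fun x => (interlacers (b :: r)).image (x :: ·))
        ((interlacers ((b + 1) :: r)).image (b :: ·)) := by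
      simp only [Finset.disjoint_left, Finset.mem_biUnion, Finset.mem_image, Finset.mem_Ico]
      rintro _ ⟨x, hx, l, _, rfl⟩ ⟨l', _, h⟩
      exact hx.2.ne' (List.cons.inj h).1
    simp only [interlacingSum_cons_cons, ih (fun c hc => (hb c hc).le) hr, ih (a := b + 1) hb hr,
      signedSum_of_le _ (ha b List.mem_cons_self), interlacers, Finset.sum_union hdisj_union,
      Finset.sum_biUnion hdisj_fibers, Finset.sum_image (List.cons_injective.injOn)]

end Interlacers

section Counting

/-- The sequence `k`, padded by zeros, as a row of a triangular array (whose entries are indexed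
from `1`). -/
def paddedRow (k : List ℤ) (j : ℕ) : ℤ :=
  (0 :: k).getD j 0

lemma paddedRow_add_one (k : List ℤ) (j : ℕ) : paddedRow k (j + 1) = k.getD j 0 := rfl

lemma paddedRow_eq_zero {k : List ℤ} {j : ℕ} (hj : ¬ (1 ≤ j ∧ j ≤ k.length)) :
    paddedRow k j = 0 := by
  cases j with
  | zero => rfl
  | succ j => exact (paddedRow_add_one k j).trans (List.getD_eq_default _ _ (by omega))

lemma paddedRow_ofFn {n : ℕ} {c : ℕ → ℤ} (hc : ∀ j, ¬ (1 ≤ j ∧ j ≤ n) → c j = 0) :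
    paddedRow (List.ofFn fun j : Fin n => c (j + 1)) = c := by
  ext j
  cases j with
  | zero => exact (hc 0 (by omega)).symm
  | succ j =>
    rw [paddedRow_add_one]
    rcases lt_or_ge j n with h | h
    · simp [h]
    · rw [hc _ (by omega), List.getD_eq_default _ _ (by simpa using h)]

lemma eq_of_paddedRow_eq {k l : List ℤ} (hlen : k.length = l.length)
    (h : paddedRow k = paddedRow l) : k = l := by
  refine List.ext_getElem hlen fun j hk hl => ?_
  simpa [paddedRow_add_one, hk, hl] using congrFun h (j + 1)

lemma forall_paddedRow_lt_iff {k : List ℤ} :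
    (∀ j, 1 ≤ j → j + 1 ≤ k.length → paddedRow k j < paddedRow k (j + 1)) ↔
      k.Pairwise (· < ·) := by
  rw [← List.isChain_iff_pairwise, List.isChain_iff_getElem]
  constructor
  · intro h j hj
    simpa [paddedRow_add_one, hj, Nat.lt_of_succ_lt hj] using h (j + 1) (by omega) (by omega)
  · intro h j hj hjk
    obtain ⟨j, rfl⟩ := Nat.exists_eq_add_of_le' hj
    simpa [paddedRow_add_one, show j + 1 < k.length from hjk, Nat.lt_of_succ_lt hjk] using h j hjk

lemma forall_paddedRow_interlace_iff {k l : List ℤ} (hlen : k.length = l.length + 1) :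
    (∀ j, 1 ≤ j → j ≤ l.length →
      paddedRow k j ≤ paddedRow l j ∧ paddedRow l j ≤ paddedRow k (j + 1)) ↔
      List.Forall₂ (· ≤ ·) k.dropLast l ∧ List.Forall₂ (· ≤ ·) l k.tail := by
  have hrow : (∀ j, 1 ≤ j → j ≤ l.length →
      paddedRow k j ≤ paddedRow l j ∧ paddedRow l j ≤ paddedRow k (j + 1)) ↔
      ∀ j (hj : j < l.length), k[j] ≤ l[j] ∧ l[j] ≤ k[j + 1] := by
    constructor
    · intro h j hj
      simpa [paddedRow_add_one, hlen, hj, hj.trans (Nat.lt_succ_self _)] using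
        h (j + 1) (by omega) hj
    · intro h j hj hjl
      obtain ⟨j, rfl⟩ := Nat.exists_eq_add_of_le' hj
      have hjl' : j < l.length := hjl
      simpa [paddedRow_add_one, hlen, hjl', hjl'.trans (Nat.lt_succ_self _)] using h j hjl'
  rw [hrow]
  simp only [List.forall₂_iff_get, List.length_dropLast, List.length_tail, hlen,
    List.get_eq_getElem, List.getElem_dropLast, List.getElem_tail]
  grind

lemma isMT_succ_iff {n : ℕ} {a : ℕ → ℕ → ℤ} :
    IsMT (n + 1) a ↔ IsMT n (Function.update a (n + 1) 0) ∧
      (∀ j, ¬ (1 ≤ j ∧ j ≤ n + 1) → a (n + 1) j = 0) ∧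
      (∀ j, 1 ≤ j → j + 1 ≤ n + 1 → a (n + 1) j < a (n + 1) (j + 1)) ∧
      (∀ j, 1 ≤ j → j ≤ n → a (n + 1) j ≤ a n j ∧ a n j ≤ a (n + 1) (j + 1)) := by
  have hrow {i : ℕ} (hi : i ≠ n + 1) : Function.update a (n + 1) 0 i = a i :=
    Function.update_of_ne hi _ _
  constructor
  · rintro ⟨hzero, hstrict, hdiag⟩
    refine ⟨⟨fun i j hij => ?_, fun i j h₁ h₂ h₃ => ?_, fun i j h₁ h₂ h₃ => ?_⟩,
      fun j hj => hzero _ _ (by omega), fun j h₁ h₂ => hstrict _ _ h₁ h₂ le_rfl,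
      fun j h₁ h₂ => hdiag _ _ h₁ h₂ le_rfl⟩
    · rcases eq_or_ne i (n + 1) with rfl | hi
      · simp
      · rw [hrow hi]
        exact hzero i j (by omega)
    · rw [hrow (by omega)]
      exact hstrict i j h₁ h₂ (by omega)
    · rw [hrow (by omega), hrow (by omega)]
      exact hdiag i j h₁ h₂ (by omega)
  · rintro ⟨⟨hzero, hstrict, hdiag⟩, hzero', hstrict', hdiag'⟩
    refine ⟨fun i j hij => ?_, fun i j h₁ h₂ h₃ => ?_, fun i j h₁ h₂ h₃ => ?_⟩
    · rcases eq_or_ne i (n + 1) with rfl | hi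
      · exact hzero' j (by omega)
      · exact hrow hi ▸ hzero i j (by omega)
    · rcases h₃.eq_or_lt with rfl | hi
      · exact hstrict' j h₁ h₂
      · exact hrow hi.ne ▸ hstrict i j h₁ h₂ (by omega)
    · rcases h₃.eq_or_lt with hi | hi
      · obtain rfl : i = n := by omega
        exact hdiag' j h₁ h₂
      · exact hrow hi.ne ▸ hrow (by omega : i ≠ n + 1) ▸ hdiag i j h₁ h₂ (by omega)

/-- The Monotone Triangles with bottom row `k`. -/
def mtOver (k : List ℤ) : Set (ℕ → ℕ → ℤ) :=
  {a | IsMT k.length a ∧ a k.length = paddedRow k}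

lemma MTset_eq_mtOver {n : ℕ} (k : Fin n → ℤ) : MTset n k = mtOver (List.ofFn k) := by
  ext a
  simp only [MTset, BottomRow, mtOver, Set.mem_ofPred_eq, List.length_ofFn]
  refine and_congr_right fun ha => ⟨fun h => ?_, fun h j => by simp [h, paddedRow_add_one]⟩
  rw [← paddedRow_ofFn fun j (hj : ¬ (1 ≤ j ∧ j ≤ n)) => ha.1 n j (by omega)]
  simp only [h]

lemma mtOver_nil : mtOver [] = {0} := by
  ext a
  simp only [mtOver, Set.mem_ofPred_eq, Set.mem_singleton_iff, List.length_nil]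
  constructor
  · rintro ⟨⟨hzero, -⟩, -⟩
    ext i j
    exact hzero i j (by omega)
  · rintro rfl
    refine ⟨⟨fun _ _ _ => rfl, by omega, by omega⟩, ?_⟩
    ext j
    exact (paddedRow_eq_zero (by rw [List.length_nil]; omega)).symm

lemma mem_mtOver_iff {k l : List ℤ} (hlen : k.length = l.length + 1) (hk : k.Pairwise (· < ·))
    {a : ℕ → ℕ → ℤ} (ha : a l.length = paddedRow l) :
    a ∈ mtOver k ↔ Interlaces k l ∧ Function.update a k.length 0 ∈ mtOver l ∧
      a k.length = paddedRow k := by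
  have hupd : Function.update a k.length 0 l.length = paddedRow l := by
    rw [Function.update_of_ne (by omega), ha]
  simp only [mtOver, Set.mem_ofPred_eq, hupd, and_true, ← and_assoc]
  refine and_congr_left fun hrow => ?_
  rw [hlen] at hrow hupd ⊢
  rw [isMT_succ_iff, hrow, ha, ← hlen, forall_paddedRow_lt_iff, forall_paddedRow_interlace_iff hlen]
  constructor
  · rintro ⟨hMT, -, -, hdrop, htail⟩
    refine ⟨⟨hdrop, htail, forall_paddedRow_lt_iff.1 fun j h₁ h₂ => ?_⟩, hlen ▸ hMT⟩
    simpa only [hlen, hupd] using hMT.2.1 _ j h₁ h₂ le_rfl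
  · rintro ⟨⟨hdrop, htail, -⟩, hMT⟩
    exact ⟨hlen ▸ hMT, fun j hj => paddedRow_eq_zero hj, hk, hdrop, htail⟩

lemma exists_interlaces_of_mem_mtOver {k : List ℤ} (hk₀ : k ≠ []) (hk : k.Pairwise (· < ·))
    {a : ℕ → ℕ → ℤ} (ha : a ∈ mtOver k) :
    ∃ l, Interlaces k l ∧ Function.update a k.length 0 ∈ mtOver l := by
  obtain ⟨n, hn⟩ : ∃ n, k.length = n + 1 :=
    Nat.exists_eq_add_one_of_ne_zero (List.length_eq_zero_iff.not.2 hk₀)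
  set l := List.ofFn fun j : Fin n => a n (j + 1)
  have hlen : l.length = n := List.length_ofFn
  have hrow : a n = paddedRow l :=
    (paddedRow_ofFn fun j hj => ha.1.1 n j (by omega)).symm
  obtain ⟨hkl, hal, -⟩ := (mem_mtOver_iff (by omega) hk (hlen ▸ hrow)).1 ha
  exact ⟨l, hkl, hal⟩

lemma update_zero_of_mem_mtOver {l : List ℤ} {a : ℕ → ℕ → ℤ} (ha : a ∈ mtOver l) :
    Function.update a (l.length + 1) 0 = a := by
  rw [Function.update_eq_self_iff]
  ext j
  exact (ha.1.1 _ j (by omega)).symm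

lemma Interlaces.update_mem_mtOver {k l : List ℤ} (h : Interlaces k l)
    (hlen : k.length = l.length + 1) (hk : k.Pairwise (· < ·)) {a : ℕ → ℕ → ℤ} (ha : a ∈ mtOver l) :
    Function.update a k.length (paddedRow k) ∈ mtOver k := by
  refine (mem_mtOver_iff hlen hk ?_).2 ⟨h, ?_, Function.update_self _ _ _⟩
  · rw [Function.update_of_ne (by omega), ha.2]
  · rwa [Function.update_idem, hlen, update_zero_of_mem_mtOver ha]

lemma bijOn_mtOver {a : ℤ} {r : List ℤ} (hk : (a :: r).Pairwise (· < ·)) :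
    Set.BijOn (Function.update · (a :: r).length 0) (mtOver (a :: r))
      (⋃ l ∈ interlacers (a :: r), mtOver l) := by
  refine ⟨fun b hb => ?_, fun b hb b' hb' h => ?_, fun b hb => ?_⟩
  · obtain ⟨l, hl, hbl⟩ := exists_interlaces_of_mem_mtOver (List.cons_ne_nil a r) hk hb
    exact Set.mem_biUnion ((mem_interlacers hk).2 hl) hbl
  · have hb_eq {c : ℕ → ℕ → ℤ} (hc : c ∈ mtOver (a :: r)) :
        Function.update (Function.update c (a :: r).length 0) (a :: r).length
          (paddedRow (a :: r)) = c := by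
      rw [Function.update_idem, ← hc.2, Function.update_eq_self]
    exact (hb_eq hb).symm.trans ((congrArg (Function.update · _ _) h).trans (hb_eq hb'))
  · obtain ⟨l, hl, hbl⟩ := Set.mem_iUnion₂.1 hb
    have hl := (mem_interlacers hk).1 hl
    refine ⟨_, hl.update_mem_mtOver hl.length_add_one hk hbl, ?_⟩
    simp only [Function.update_idem]
    rw [hl.length_add_one, update_zero_of_mem_mtOver hbl]

lemma pairwiseDisjoint_mtOver {s : Set (List ℤ)} {n : ℕ} (hs : ∀ l ∈ s, l.length = n) :
    s.PairwiseDisjoint mtOver := by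
  intro l hl l' hl' hne
  refine Set.disjoint_left.2 fun a ha ha' => hne (eq_of_paddedRow_eq ?_ ?_)
  · rw [hs l hl, hs l' hl']
  · rw [← ha.2, ← ha'.2, hs l hl, hs l' hl']

lemma finite_mtOver {k : List ℤ} (hk : k.Pairwise (· < ·)) : (mtOver k).Finite := by
  match k with
  | [] => exact mtOver_nil ▸ Set.finite_singleton 0
  | a :: r =>
    refine (bijOn_mtOver hk).finite_iff_finite.2 ((interlacers (a :: r)).finite_toSet.biUnion ?_)
    intro l hl
    have hl := (mem_interlacers hk).1 hl
    have : r.length = l.length := Nat.succ_injective hl.length_add_one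
    exact finite_mtOver hl.2.2
termination_by k.length

lemma ncard_mtOver {n : ℕ} {k : List ℤ} (hn : k.length = n) (hk : k.Pairwise (· < ·)) :
    ((mtOver k).ncard : ℚ) = alphaList n k := by
  induction n generalizing k with
  | zero =>
    obtain rfl := List.length_eq_zero_iff.1 hn
    simp [mtOver_nil, alphaList]
  | succ n ih =>
    obtain ⟨a, r, rfl⟩ := List.exists_cons_of_length_eq_add_one hn
    have hinter {l : List ℤ} (hl : l ∈ interlacers (a :: r)) :
        l.length = n ∧ l.Pairwise (· < ·) := by
      have hl := (mem_interlacers hk).1 hl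
      exact ⟨Nat.succ_injective (hl.length_add_one.symm.trans hn), hl.2.2⟩
    rw [(bijOn_mtOver hk).ncard_eq]
    calc (((⋃ l ∈ interlacers (a :: r), mtOver l).ncard : ℕ) : ℚ)
        = ∑ l ∈ interlacers (a :: r), ((mtOver l).ncard : ℚ) := by
          rw [← Nat.cast_sum, ← finsum_mem_coe_finset, ← Set.Finite.ncard_biUnion
            (Finset.finite_toSet _) (fun l hl => finite_mtOver (hinter hl).2)
            (pairwiseDisjoint_mtOver fun l hl => (hinter hl).1)]
          simp only [Finset.mem_coe]
      _ = ∑ l ∈ interlacers (a :: r), alphaList n l :=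
          Finset.sum_congr rfl fun l hl => ih (hinter hl).1 (hinter hl).2
      _ = alphaList (n + 1) (a :: r) :=
          (interlacingSum_eq_sum (fun _ hb => (List.rel_of_pairwise_cons hk hb).le) hk.of_cons
            (alphaList n)).symm

lemma ncard_MTset {n : ℕ} {k : Fin n → ℤ} (hk : StrictMono k) :
    ((MTset n k).ncard : ℚ) = alphaList n (List.ofFn k) := by
  rw [MTset_eq_mtOver, ncard_mtOver List.length_ofFn (List.pairwise_ofFn.2 fun _ _ h => hk h)]

end Counting

section Uniqueness

lemma polynomial_eq_zero_of_forall_intCast_ge {R : Type*} [CommRing R] [IsDomain R] [CharZero R]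
    {Q : Polynomial R} (c : ℤ) (hQ : ∀ t : ℤ, c ≤ t → Q.eval (t : R) = 0) : Q = 0 := by
  refine Q.eq_zero_of_infinite_isRoot
    (((Set.Ici_infinite c).image Int.cast_injective.injOn).mono ?_)
  rintro _ ⟨t, ht, rfl⟩
  exact hQ t ht

lemma strictMonoOn_Iic_update {ι β : Type*} [PartialOrder ι] [DecidableEq ι] [Preorder β]
    {f : ι → β} {i : ι} {t : β} (hf : StrictMonoOn f (Set.Iio i)) (ht : ∀ j < i, f j < t) :
    StrictMonoOn (Function.update f i t) (Set.Iic i) := by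
  intro x _ y hy hxy
  have hxi : x < i := hxy.trans_le hy
  rw [Function.update_of_ne hxi.ne]
  rcases eq_or_ne y i with rfl | hyi
  · simpa using ht x hxi
  · rw [Function.update_of_ne hyi]
    exact hf hxi (lt_of_le_of_ne hy hyi) hxy

lemma eq_zero_of_forall_strictMono {R : Type*} [CommRing R] [IsDomain R] [CharZero R] {n : ℕ}
    {D : (Fin n → ℤ) → R}
    (hD : ∀ k i, ∃ Q : Polynomial R, ∀ t : ℤ, D (Function.update k i t) = Q.eval (t : R))
    (hmono : ∀ k, StrictMono k → D k = 0) (k : Fin n → ℤ) : D k = 0 := by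
  -- The monotonicity requirement is relaxed one entry at a time, starting from the last one.
  have hinit (i : ℕ) (hi : i ≤ n) (k : Fin n → ℤ) (hk : StrictMonoOn k {j | j.1 < i}) :
      D k = 0 := by
    induction hi using Nat.decreasingInduction generalizing k with
    | self => exact hmono k fun x y h => hk x.2 y.2 h
    | of_succ i hi ih =>
      obtain ⟨Q, hQ⟩ := hD k ⟨i, hi⟩
      obtain ⟨c, hc⟩ := (Set.finite_range k).bddAbove
      have hQ₀ : Q = 0 := by
        refine polynomial_eq_zero_of_forall_intCast_ge (c + 1) fun t ht => hQ t ▸ ih _ ?_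
        have hlt (j : Fin n) : k j < t := (hc ⟨j, rfl⟩).trans_lt (Int.lt_of_add_one_le ht)
        exact (strictMonoOn_Iic_update hk fun j _ => hlt j).mono fun _ => Nat.lt_succ_iff.1
      simpa [hQ₀] using hQ (k ⟨i, hi⟩)
  exact hinit 0 n.zero_le k (by simp [StrictMonoOn])

lemma IsAlpha.eq_alphaList {n : ℕ} {α : (Fin n → ℤ) → ℚ} (hα : IsAlpha n α) (k : Fin n → ℤ) :
    α k = alphaList n (List.ofFn k) := by
  obtain ⟨⟨P, -, hP⟩, hcount⟩ := hα
  refine sub_eq_zero.1 (eq_zero_of_forall_strictMono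
    (D := fun k => α k - alphaList n (List.ofFn k)) (fun k i => ?_) (fun k hk => ?_) k)
  · set S := (Polynomial.aeval (R := ℚ) (Int.cast : ℤ → ℚ)).range
    have hentry (j : Fin n) : (fun t => (Function.update k i t j : ℚ)) ∈ S := by
      rcases eq_or_ne j i with rfl | hj
      · simp only [Function.update_self]
        exact AlgHom.mem_range _ |>.2 ⟨Polynomial.X, Polynomial.aeval_X _⟩
      · simp only [Function.update_of_ne hj]
        exact S.algebraMap_mem (k j : ℚ)
    have hlist := isPolynomialOnLists_alphaList n S (List.ofFn fun j t => Function.update k i t j)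
      (List.forall_mem_ofFn_iff.2 hentry)
    obtain ⟨Q, hQ⟩ := AlgHom.mem_range _ |>.1 (S.sub_mem (mvPolynomial_eval_mem hentry P) hlist)
    refine ⟨Q, fun t => ?_⟩
    have hQt := congrFun hQ t
    simp only [Polynomial.aeval_fn_apply, Polynomial.coe_aeval_eq_eval, Pi.sub_apply,
      List.map_ofFn] at hQt
    rw [hQt, hP]
    rfl
  · rw [hcount k hk, ncard_MTset hk, sub_self]

lemma ofFn_pair {n p : ℕ} (hp : p + 1 < n) (k : Fin n → ℤ) (x y : ℤ) :
    List.ofFn (fun j => if j.1 = p then x else if j.1 = p + 1 then y else k j) =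
      (List.ofFn k).take p ++ x :: y :: (List.ofFn k).drop (p + 2) := by
  refine List.ext_getElem ?_ fun i hi _ => ?_
  · simp only [List.length_ofFn, List.length_append, List.length_take, List.length_cons,
      List.length_drop]
    omega
  · simp only [List.getElem_ofFn, List.getElem_append, List.length_take, List.length_ofFn,
      List.getElem_take, List.getElem_cons, List.getElem_drop,
      min_eq_left (show p ≤ n by omega)]
    grind

end Uniqueness

/-- For every `n ≥ 2`, every (0-indexed) position `p` with `p + 1 < n`, and all
integers `k₁,…` and `m`:
`α(n; …, m, m+1, …) = α(n; …, m, m, …) + α(n; …, m+1, m+1, …)`,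
where the displayed pair sits in positions `p, p+1` and the remaining entries
are given by `k`. -/
theorem alpha_pair_identity (n : ℕ) (hn : 2 ≤ n) (p : ℕ) (hp : p + 1 < n)
    (α : (Fin n → ℤ) → ℚ) (hα : IsAlpha n α) (k : Fin n → ℤ) (m : ℤ) :
    α (fun j => if j.1 = p then m else if j.1 = p + 1 then m + 1 else k j) =
      α (fun j => if j.1 = p then m else if j.1 = p + 1 then m else k j) +
      α (fun j => if j.1 = p then m + 1 else if j.1 = p + 1 then m + 1 else k j) := by
  simp only [hα.eq_alphaList, ofFn_pair hp]
  exact pairIdentity_alphaList n _ _ m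
end

section
/- For every n ≥ 2, every index 1 ≤ i ≤ n−1, and all integers k_1,…,k_{i−1}, m, k_{i+2},…,k_n, the set 𝒫(k_1,…,k_{i−1}, m, m+1, k_{i+2},…,k_n) of penultimate rows is the disjoint union of 𝒫(k_1,…,k_{i−1}, m, m, k_{i+2},…,k_n) and 𝒫(k_1,…,k_{i−1}, m+1, m+1, k_{i+2},…,k_n); moreover, each row (l_1,…,l_{n−1}) has the same total number of newcomers and sign-changing pairs with respect to the bottom row (k_1,…,k_{i−1}, m, m+1, k_{i+2},…,k_n) as with respect to the bottom row of the part of the union containing it. -/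
/-- `𝒫(k)`: the set of penultimate rows of Generalized Monotone Triangles of
size `m + 1` with bottom row `k`. -/
def PenSet (m : ℕ) (k : Fin (m + 1) → ℤ) : Set (Fin m → ℤ) :=
  {l | ∃ a, IsGMT (m + 1) a ∧ BottomRow (m + 1) a k ∧
    ∀ j : Fin m, a m (j.1 + 1) = l j}

/-- Extension of a finite row to `ℕ` (by `0`), for convenient indexing. -/
def rowExt {m : ℕ} (l : Fin m → ℤ) : ℕ → ℤ :=
  fun j => if h : j < m then l ⟨j, h⟩ else 0

/-- `sc(k; l)`: the total number of newcomers and sign-changing pairs in the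
two-row array with top row `l` (length `m`) and bottom row `k` (length `m+1`):
`l j` is a newcomer if `k j > l j > k (j+1)`, and a pair `(l j, l (j+1))` of
equal consecutive entries is sign-changing if `k (j+1) = l j`. -/
def sc2 (m : ℕ) (k : Fin (m + 1) → ℤ) (l : Fin m → ℤ) : ℕ :=
  ((Finset.range m).filter (fun j =>
    rowExt l j < rowExt k j ∧ rowExt k (j + 1) < rowExt l j)).card +
  ((Finset.range m).filter (fun j =>
    j + 1 < m ∧ rowExt l j = rowExt l (j + 1) ∧ rowExt k (j + 1) = rowExt l j)).card

/-! Write `c ⋖ d` for the two adjacent entries `m`, `m + 1` of the bottom row, and let `l` be a row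
above. The entry of `l` between them is `c` or `d`. If it is `c`, replacing `d` by `c` in the bottom
row creates and destroys no descent: it could only do so if the next entry were `c`, and then `l`
would have three consecutive entries `c`, impossible in a row of a GMT that lies below another row.
Hence `l` fits over the new row, and conversely. The newcomers lost by the replacement are entries
`c` immediately after the one between `c` and `d`, and each of them forms a new sign-changing pair
with it. The case `d` is the mirror image. -/

section Rows

open Finset OrderDual Function

variable {α : Type*} {n N : ℕ}

/-- The mirror image of a row, read in the dual order so that ascents remain ascents. It exchanges
the cases `l p = k p.castSucc` and `l p = k p.succ`. -/
def reflect (r : Fin n → α) : Fin n → αᵒᵈ := toDual ∘ r ∘ Fin.rev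

theorem reflect_apply (r : Fin n → α) (j : Fin n) : reflect r j = toDual (r j.rev) := rfl

theorem reflect_update (r : Fin n → α) (j : Fin n) (x : α) :
    reflect (update r j x) = update (reflect r) j.rev (toDual x) := by
  ext i
  simp only [reflect_apply, update_apply, Fin.rev_eq_iff]
  split_ifs <;> rfl

/-- A row without three equal consecutive entries, as are all rows of a generalized monotone
triangle. -/
def NoThreeEq (l : Fin n → α) : Prop :=
  ∀ i j h : Fin n, i.val + 1 = j.val → j.val + 1 = h.val → l i = l j → l j ≠ l h

theorem NoThreeEq.reflect {l : Fin n → α} (hl : NoThreeEq l) : NoThreeEq (reflect l) := by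
  intro i j h hij hjh h₁ h₂
  refine hl h.rev j.rev i.rev ?_ ?_ h₂.symm h₁.symm <;> simp only [Fin.val_rev] <;> omega

variable {k : Fin (N + 1) → α} {l : Fin N → α} {p : Fin N}

theorem ne_of_succ_eq_castSucc {i j : Fin N} (hij : i.succ = j.castSucc) : j ≠ i := by
  rintro rfl
  exact Fin.castSucc_lt_succ.ne' hij

theorem update_succ_apply_succ (x : α) (j : Fin N) :
    update k p.succ x j.succ = if j = p then x else k j.succ := by
  simp only [update_apply, Fin.succ_inj]

theorem update_succ_apply_castSucc (x : α) (j : Fin N) :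
    update k p.succ x j.castSucc = if p.succ = j.castSucc then x else k j.castSucc := by
  simp only [update_apply, eq_comm]

theorem ite_eq_update_update (x y : α) :
    (fun j : Fin (N + 1) => if j.1 = p then x else if j.1 = p + 1 then y else k j) =
      update (update k p.succ y) p.castSucc x := by
  ext j
  simp only [update_apply, Fin.ext_iff, Fin.val_succ, Fin.val_castSucc]

variable [DecidableEq α]

/-- The sign-changing pairs of `l` over `k`, each recorded by the position of the entry of `k`
between its two members. -/
def signChanges (k : Fin (N + 1) → α) (l : Fin N → α) : Finset (Fin (N + 1)) :=
  {q | ∃ i j, i.succ = q ∧ j.castSucc = q ∧ l i = k q ∧ l j = k q}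

theorem card_signChanges_reflect : #(signChanges (reflect k) (reflect l)) = #(signChanges k l) := by
  refine card_equiv Fin.revPerm fun q => ?_
  simp only [signChanges, mem_filter_univ, reflect_apply, Fin.revPerm_apply, toDual_inj]
  constructor
  · rintro ⟨i, j, rfl, hj, hi', hj'⟩
    exact ⟨j.rev, i.rev, by rw [← hj, Fin.rev_castSucc], (Fin.rev_succ i).symm, hj', hi'⟩
  · rintro ⟨i, j, hi, hj, hi', hj'⟩
    refine ⟨j.rev, i.rev, ?_, ?_, by rwa [Fin.rev_rev], by rwa [Fin.rev_rev]⟩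
    · rw [← Fin.rev_castSucc, hj, Fin.rev_rev]
    · rw [← Fin.rev_succ, hi, Fin.rev_rev]

theorem succ_mem_signChanges_iff : p.succ ∈ signChanges k l ↔
    ∃ j, p.succ = j.castSucc ∧ l p = k p.succ ∧ l j = k p.succ := by
  simp only [signChanges, mem_filter_univ, Fin.succ_inj, exists_and_left, exists_eq_left,
    eq_comm (a := p.succ)]

theorem card_signChanges_update_succ (hp : k p.castSucc ≠ k p.succ) (hlp : l p = k p.castSucc) :
    #(signChanges (update k p.succ (k p.castSucc)) l) =
      #(signChanges k l) + #{j : Fin N | p.succ = j.castSucc ∧ l j = k p.castSucc} := by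
  have hnotMem : p.succ ∉ signChanges k l := by
    rw [succ_mem_signChanges_iff]
    rintro ⟨-, -, h, -⟩
    exact hp (hlp.symm.trans h)
  have hunion : signChanges (update k p.succ (k p.castSucc)) l = signChanges k l ∪
      ({j | p.succ = j.castSucc ∧ l j = k p.castSucc} : Finset (Fin N)).map Fin.castSuccEmb := by
    ext q
    rw [mem_union, mem_map]
    by_cases hq : q = p.succ
    · subst hq
      simp only [succ_mem_signChanges_iff, hnotMem, false_or, update_self, hlp, true_and,
        mem_filter_univ, Fin.coe_castSuccEmb]
      exact exists_congr fun j => (and_iff_left_of_imp fun h => h.1.symm).symm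
    · simp only [signChanges, mem_filter_univ, update_of_ne hq, Fin.coe_castSuccEmb]
      refine (or_iff_left ?_).symm
      rintro ⟨j, ⟨hj, -⟩, rfl⟩
      exact hq hj.symm
  rw [hunion, card_union_of_disjoint, card_map]
  rw [disjoint_right, forall_mem_map]
  intro j hj
  rwa [Fin.coe_castSuccEmb, ← ((mem_filter_univ j).1 hj).1]

end Rows

section Interlacing

open Finset OrderDual Function

variable {α : Type*} [LinearOrder α] {N : ℕ} {k : Fin (N + 1) → α} {l : Fin N → α} {p : Fin N}

/-- The conditions that a generalized monotone triangle imposes on a row `l` and the row `k` below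
it. Entry `l j` lies above `k j.castSucc` and `k j.succ`, so `i.succ = j.castSucc` says that `l i`
and `l j` are consecutive. -/
structure Interlaces_s14 (k : Fin (N + 1) → α) (l : Fin N → α) : Prop where
  mem_uIcc : ∀ j, l j ∈ Set.uIcc (k j.castSucc) (k j.succ)
  lt_of_le_of_le : ∀ i j, i.succ = j.castSucc → k i.castSucc ≤ k i.succ → k j.castSucc ≤ k j.succ →
    l i < l j
  exists_eq_left : ∀ j, k j.succ < k j.castSucc → l j = k j.castSucc →
    ∃ i, i.succ = j.castSucc ∧ l i = l j
  exists_eq_right : ∀ j, k j.succ < k j.castSucc → l j = k j.succ →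
    ∃ i, j.succ = i.castSucc ∧ l i = l j

theorem Interlaces_s14.reflect (h : Interlaces_s14 k l) : Interlaces_s14 (reflect k) (reflect l) where
  mem_uIcc j := by
    rw [reflect_apply, reflect_apply, reflect_apply, Set.uIcc_toDual, Set.uIcc_comm,
      Fin.rev_castSucc, Fin.rev_succ]
    exact h.mem_uIcc j.rev
  lt_of_le_of_le i j hij hi hj := by
    simp only [reflect_apply, Fin.rev_castSucc, Fin.rev_succ] at hi hj
    refine h.lt_of_le_of_le j.rev i.rev ?_ hj hi
    rw [← Fin.rev_castSucc, ← hij, Fin.rev_succ]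
  exists_eq_left j hd hj := by
    simp only [reflect_apply, Fin.rev_castSucc, Fin.rev_succ] at hd hj
    obtain ⟨i, hi, he⟩ := h.exists_eq_right j.rev hd hj
    refine ⟨i.rev, ?_, by rw [reflect_apply, Fin.rev_rev, he]; rfl⟩
    rw [← Fin.rev_castSucc, ← hi, Fin.rev_succ, Fin.rev_rev]
  exists_eq_right j hd hj := by
    simp only [reflect_apply, Fin.rev_castSucc, Fin.rev_succ] at hd hj
    obtain ⟨i, hi, he⟩ := h.exists_eq_left j.rev hd hj
    refine ⟨i.rev, ?_, by rw [reflect_apply, Fin.rev_rev, he]; rfl⟩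
    rw [← Fin.rev_succ, hi, Fin.rev_castSucc, Fin.rev_rev]

theorem interlaces_reflect_iff : Interlaces_s14 (reflect k) (reflect l) ↔ Interlaces_s14 k l := by
  refine ⟨fun h => ?_, Interlaces_s14.reflect⟩
  have reflect_reflect {m : ℕ} (r : Fin m → α) : reflect (reflect r) = toDual ∘ toDual ∘ r := by
    ext j
    simp only [reflect_apply, Fin.rev_rev, comp_apply]
  have h' := h.reflect
  rwa [reflect_reflect, reflect_reflect] at h'

theorem Interlaces_s14.noThreeEq (h : Interlaces_s14 k l) : NoThreeEq k := by
  rintro a b c hab hbc h₁ h₂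
  obtain ⟨i, rfl⟩ : ∃ i : Fin N, i.castSucc = a := ⟨⟨a, by omega⟩, rfl⟩
  obtain ⟨j, rfl⟩ : ∃ j : Fin N, j.castSucc = b := ⟨⟨b, by omega⟩, rfl⟩
  obtain rfl : j.succ = c := Fin.ext hbc
  have hij : i.succ = j.castSucc := Fin.ext hab
  have hlt := h.lt_of_le_of_le i j hij (hij ▸ h₁.le) h₂.le
  have hi := h.mem_uIcc i
  have hj := h.mem_uIcc j
  rw [hij, h₁, Set.uIcc_self, Set.mem_singleton_iff] at hi
  rw [← h₂, Set.uIcc_self, Set.mem_singleton_iff] at hj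
  exact hlt.ne (hi.trans hj.symm)

theorem Interlaces_s14.eq_or_eq_of_covBy (h : Interlaces_s14 k l) (hp : k p.castSucc ⋖ k p.succ) :
    l p = k p.castSucc ∨ l p = k p.succ := by
  have hmem := h.mem_uIcc p
  rwa [Set.uIcc_of_le hp.le, hp.Icc_eq] at hmem

theorem Interlaces_s14.apply_succ_ne (h : Interlaces_s14 k l) (hl : NoThreeEq l)
    (hp : k p.castSucc ⋖ k p.succ) (hlp : l p = k p.castSucc) {j : Fin N}
    (hj : p.succ = j.castSucc) : k j.succ ≠ k p.castSucc := by
  intro he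
  have hd : k j.succ < k j.castSucc := by rw [he, ← hj]; exact hp.lt
  have hmem := h.mem_uIcc j
  rw [he, ← hj, Set.uIcc_of_ge hp.le, hp.Icc_eq] at hmem
  rcases hmem with hlj | hlj
  · obtain ⟨i, hi, hli⟩ := h.exists_eq_right j hd (hlj.trans he.symm)
    exact hl p j i (congrArg Fin.val hj) (congrArg Fin.val hi) (hlp.trans hlj.symm) hli.symm
  · obtain ⟨i, hi, hli⟩ := h.exists_eq_left j hd (by rw [hlj, hj])
    obtain rfl : i = p := Fin.succ_injective N (hi.trans hj.symm)
    exact hp.ne (by rw [← hlp, hli, hlj])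

theorem update_succ_lt_iff (hp : k p.castSucc ⋖ k p.succ)
    (hne : ∀ j : Fin N, p.succ = j.castSucc → k j.succ ≠ k p.castSucc) (j : Fin N) :
    update k p.succ (k p.castSucc) j.succ < update k p.succ (k p.castSucc) j.castSucc ↔
      k j.succ < k j.castSucc := by
  rw [update_succ_apply_succ, update_succ_apply_castSucc]
  split_ifs with hjp hj hj
  · subst hjp
    exact absurd hj (Fin.castSucc_lt_succ).ne'
  · subst hjp
    exact iff_of_false (lt_irrefl _) hp.lt.not_gt
  · rw [← hj, hp.lt_iff_le_left]
    exact (hne j hj).le_iff_lt.symm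
  · rfl

theorem mem_uIcc_left_of_covBy {a b x y : α} (hab : a ⋖ b) (hy : y ≠ a) (hx : y < a → x ≠ b)
    (h : x ∈ Set.uIcc b y) : x ∈ Set.uIcc a y := by
  rcases hy.lt_or_gt with hya | hay
  · rw [Set.uIcc_of_ge (hya.trans hab.lt).le] at h
    rw [Set.uIcc_of_ge hya.le]
    exact ⟨h.1, hab.le_of_lt (h.2.lt_of_ne (hx hya))⟩
  · rw [Set.uIcc_of_le (hab.ge_of_gt hay)] at h
    rw [Set.uIcc_of_le hay.le]
    exact ⟨hab.le.trans h.1, h.2⟩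

theorem mem_uIcc_right_of_covBy {a b x y : α} (hab : a ⋖ b) (hy : y ≠ a) (hx : a < y → x ≠ a)
    (h : x ∈ Set.uIcc a y) : x ∈ Set.uIcc b y := by
  rcases hy.lt_or_gt with hya | hay
  · rw [Set.uIcc_of_ge hya.le] at h
    rw [Set.uIcc_of_ge (hya.trans hab.lt).le]
    exact ⟨h.1, h.2.trans hab.le⟩
  · rw [Set.uIcc_of_le hay.le] at h
    rw [Set.uIcc_of_le (hab.ge_of_gt hay)]
    exact ⟨hab.ge_of_gt (h.1.lt_of_ne' (hx hay)), h.2⟩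

theorem Interlaces_s14.update_succ (h : Interlaces_s14 k l) (hl : NoThreeEq l)
    (hp : k p.castSucc ⋖ k p.succ) (hlp : l p = k p.castSucc) :
    Interlaces_s14 (update k p.succ (k p.castSucc)) l := by
  have hne (j : Fin N) := h.apply_succ_ne hl hp hlp (j := j)
  have hdesc := update_succ_lt_iff hp hne
  refine ⟨fun j => ?_, fun i j hij hi hj => ?_, fun j hd hj => ?_, fun j hd hj => ?_⟩
  · have hmem := h.mem_uIcc j
    rw [update_succ_apply_succ, update_succ_apply_castSucc]
    split_ifs with hj hjp hjp
    · exact absurd hjp (ne_of_succ_eq_castSucc hj)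
    · rw [← hj] at hmem
      refine mem_uIcc_left_of_covBy hp (hne j hj) (fun hlt hlj => ?_) hmem
      obtain ⟨i, hi, hli⟩ := h.exists_eq_left j (hj ▸ hlt.trans hp.lt) (hj ▸ hlj)
      obtain rfl : i = p := Fin.succ_injective N (hi.trans hj.symm)
      exact hp.ne (hlp.symm.trans (hli.trans hlj))
    · rw [hjp, hlp]
      exact Set.left_mem_uIcc
    · exact hmem
  · rw [← not_lt, hdesc, not_lt] at hi hj
    exact h.lt_of_le_of_le i j hij hi hj
  · rw [hdesc] at hd
    rw [update_succ_apply_castSucc] at hj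
    split_ifs at hj with hjp
    · exact ⟨p, hjp, hlp.trans hj.symm⟩
    · exact h.exists_eq_left j hd hj
  · rw [hdesc] at hd
    rw [update_succ_apply_succ, if_neg (by rintro rfl; exact hd.not_gt hp.lt)] at hj
    exact h.exists_eq_right j hd hj

theorem Interlaces_s14.apply_succ_ne_of_update_succ (h : Interlaces_s14 (update k p.succ (k p.castSucc)) l)
    {j : Fin N} (hj : p.succ = j.castSucc) : k j.succ ≠ k p.castSucc := by
  have hthree := h.noThreeEq p.castSucc p.succ j.succ rfl (congrArg (·.val + 1) hj)
  rw [update_self, update_of_ne Fin.castSucc_lt_succ.ne, update_succ_apply_succ,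
    if_neg (ne_of_succ_eq_castSucc hj)] at hthree
  exact (hthree rfl).symm

theorem Interlaces_s14.of_update_succ (h : Interlaces_s14 (update k p.succ (k p.castSucc)) l)
    (hp : k p.castSucc ⋖ k p.succ) (hlp : l p = k p.castSucc) : Interlaces_s14 k l := by
  have hdesc := update_succ_lt_iff hp fun j => h.apply_succ_ne_of_update_succ
  have hmem_next {j : Fin N} (hj : p.succ = j.castSucc) :
      l j ∈ Set.uIcc (k p.castSucc) (k j.succ) := by
    have hmem := h.mem_uIcc j
    rwa [update_succ_apply_succ, if_neg (ne_of_succ_eq_castSucc hj), update_succ_apply_castSucc,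
      if_pos hj] at hmem
  have hlt {i j : Fin N} (hij : i.succ = j.castSucc) (hi : k i.castSucc ≤ k i.succ)
      (hj : k j.castSucc ≤ k j.succ) : l i < l j := by
    rw [← not_lt, ← hdesc, not_lt] at hi hj
    exact h.lt_of_le_of_le i j hij hi hj
  refine ⟨fun j => ?_, fun i j => hlt, fun j hd hj => ?_, fun j hd hj => ?_⟩
  · by_cases hjp : j = p
    · rw [hjp, hlp]
      exact Set.left_mem_uIcc
    by_cases hj : p.succ = j.castSucc
    · refine hj ▸ mem_uIcc_right_of_covBy hp (h.apply_succ_ne_of_update_succ hj) (fun hgt => ?_)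
        (hmem_next hj)
      exact hlp ▸ (hlt hj hp.le (hj ▸ hp.ge_of_gt hgt)).ne'
    · have hmem := h.mem_uIcc j
      rwa [update_succ_apply_succ, if_neg hjp, update_succ_apply_castSucc, if_neg hj] at hmem
  · by_cases hjp : p.succ = j.castSucc
    · have hmem := hmem_next hjp
      rw [hj, ← hjp] at hmem
      rw [← hjp] at hd
      exact absurd hmem.2 (max_lt hp.lt hd).not_ge
    · refine h.exists_eq_left j ((hdesc j).2 hd) ?_
      rwa [update_succ_apply_castSucc, if_neg hjp]
  · refine h.exists_eq_right j ((hdesc j).2 hd) ?_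
    rwa [update_succ_apply_succ, if_neg (by rintro rfl; exact hd.not_gt hp.lt)]

theorem Interlaces_s14.apply_eq_of_update_succ
    (h : Interlaces_s14 (update k p.succ (k p.castSucc)) l) : l p = k p.castSucc := by
  simpa only [update_self, update_of_ne Fin.castSucc_lt_succ.ne, Set.uIcc_self,
    Set.mem_singleton_iff] using h.mem_uIcc p

theorem interlaces_update_succ_iff (hl : NoThreeEq l) (hp : k p.castSucc ⋖ k p.succ) :
    Interlaces_s14 (update k p.succ (k p.castSucc)) l ↔ Interlaces_s14 k l ∧ l p = k p.castSucc :=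
  ⟨fun h => ⟨h.of_update_succ hp h.apply_eq_of_update_succ, h.apply_eq_of_update_succ⟩,
    fun h => h.1.update_succ hl hp h.2⟩

theorem interlaces_update_castSucc_iff (hl : NoThreeEq l) (hp : k p.castSucc ⋖ k p.succ) :
    Interlaces_s14 (update k p.castSucc (k p.succ)) l ↔ Interlaces_s14 k l ∧ l p = k p.succ := by
  have hmirror := interlaces_update_succ_iff (k := reflect k) (p := p.rev) hl.reflect
  simp only [reflect_apply, ← Fin.rev_succ, ← Fin.rev_castSucc, Fin.rev_rev, toDual_inj] at hmirror
  rw [← reflect_update, interlaces_reflect_iff, interlaces_reflect_iff] at hmirror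
  exact hmirror hp.toDual

/-- The positions of newcomers of `l` over `k`; `sc2` counts them together with `signChanges`. -/
def newcomers (k : Fin (N + 1) → α) (l : Fin N → α) : Finset (Fin N) :=
  {j | k j.succ < l j ∧ l j < k j.castSucc}

theorem card_newcomers_reflect : #(newcomers (reflect k) (reflect l)) = #(newcomers k l) := by
  refine card_equiv Fin.revPerm fun j => ?_
  simp only [newcomers, mem_filter, mem_univ, true_and, reflect_apply, Fin.revPerm_apply,
    toDual_lt_toDual, Fin.rev_castSucc, Fin.rev_succ]
  exact and_comm

theorem Interlaces_s14.apply_succ_lt_of_update_succ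
    (h : Interlaces_s14 (update k p.succ (k p.castSucc)) l) {j : Fin N} (hj : p.succ = j.castSucc)
    (hlj : l j = k p.castSucc) : k j.succ < k p.castSucc := by
  by_contra! hle
  have hlt := h.lt_of_le_of_le p j hj
  rw [← hj, update_self, update_of_ne Fin.castSucc_lt_succ.ne, update_succ_apply_succ,
    if_neg (ne_of_succ_eq_castSucc hj), h.apply_eq_of_update_succ, hlj] at hlt
  exact (hlt le_rfl hle).false

theorem card_newcomers_eq_card_update_succ_add (hp : k p.castSucc ⋖ k p.succ)
    (h : Interlaces_s14 (update k p.succ (k p.castSucc)) l) :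
    #(newcomers k l) = #(newcomers (update k p.succ (k p.castSucc)) l) +
      #{j : Fin N | p.succ = j.castSucc ∧ l j = k p.castSucc} := by
  rw [← card_union_of_disjoint]
  · congr 1
    ext j
    simp only [mem_union, newcomers, mem_filter_univ, update_succ_apply_succ,
      update_succ_apply_castSucc]
    split_ifs with hjp hj hj
    · exact absurd hjp (ne_of_succ_eq_castSucc hj)
    · subst hjp
      simp only [hj, false_and, or_false]
      rw [h.apply_eq_of_update_succ]
      simp only [lt_self_iff_false, and_false]
    · have hlt := h.apply_succ_lt_of_update_succ hj
      rw [← hj, hp.lt_iff_le_left]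
      grind
    · simp only [hj, false_and, or_false]
  · rw [disjoint_right]
    intro j
    simp only [newcomers, mem_filter_univ, update_succ_apply_castSucc]
    rintro ⟨hj, hlj⟩ ⟨-, hlt⟩
    rw [if_pos hj, hlj] at hlt
    exact hlt.false

theorem card_newcomers_add_card_signChanges_update_succ (hp : k p.castSucc ⋖ k p.succ)
    (h : Interlaces_s14 (update k p.succ (k p.castSucc)) l) :
    #(newcomers k l) + #(signChanges k l) =
      #(newcomers (update k p.succ (k p.castSucc)) l) +
        #(signChanges (update k p.succ (k p.castSucc)) l) := by
  rw [card_newcomers_eq_card_update_succ_add hp h,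
    card_signChanges_update_succ hp.ne h.apply_eq_of_update_succ, add_right_comm, add_assoc]

theorem card_newcomers_add_card_signChanges_update_castSucc (hp : k p.castSucc ⋖ k p.succ)
    (h : Interlaces_s14 (update k p.castSucc (k p.succ)) l) :
    #(newcomers k l) + #(signChanges k l) =
      #(newcomers (update k p.castSucc (k p.succ)) l) +
        #(signChanges (update k p.castSucc (k p.succ)) l) := by
  have hmirror := card_newcomers_add_card_signChanges_update_succ (k := reflect k) (l := reflect l)
    (p := p.rev)
  simp only [reflect_apply, ← Fin.rev_succ, ← Fin.rev_castSucc, Fin.rev_rev] at hmirror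
  rw [← reflect_update, interlaces_reflect_iff] at hmirror
  simpa only [card_newcomers_reflect, card_signChanges_reflect] using hmirror hp.toDual h

end Interlacing

section Triangles

open Finset Function

variable {n N : ℕ} {a : ℕ → ℕ → ℤ}

/-- Row `i` of a triangular array, as a tuple; the `1`-indexed entries of the array become
`0`-indexed. -/
def row (a : ℕ → ℕ → ℤ) (i : ℕ) : Fin i → ℤ := fun j => a i (j + 1)

theorem bottomRow_iff_row_eq {k : Fin n → ℤ} : BottomRow n a k ↔ row a n = k :=
  funext_iff.symm

theorem IsGMT.interlaces_row (h : IsGMT n a) {i : ℕ} (hi : i + 1 ≤ n) :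
    Interlaces_s14 (row a (i + 1)) (row a i) := by
  obtain ⟨-, hmem, hlt, hdesc⟩ := h
  refine ⟨fun j => hmem i (j + 1) (by omega) j.2 hi, ?_, ?_, ?_⟩
  · rintro j ⟨j', hj'⟩ hjj'
    obtain rfl : j + 1 = j' := congrArg Fin.val hjj'
    exact hlt i (j + 1) (by omega) hj' hi
  · rintro ⟨j, hj⟩ hd he
    obtain ⟨hj₂, hl⟩ := (hdesc i (j + 1) (by omega) hj hi).1 he hd
    obtain ⟨j, rfl⟩ := Nat.exists_eq_add_of_le' (Nat.le_of_succ_le_succ hj₂)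
    exact ⟨⟨j, by omega⟩, rfl, hl⟩
  · intro j hd he
    obtain ⟨hj, hl⟩ := (hdesc i (j + 1) (by omega) j.2 hi).2 hd he.symm
    exact ⟨⟨j + 1, hj⟩, rfl, hl⟩

theorem isGMT_of_interlaces_row (ha : IsTri n a)
    (h : ∀ i, i + 1 ≤ n → Interlaces_s14 (row a (i + 1)) (row a i)) : IsGMT n a := by
  refine ⟨ha, fun i j hj₁ hji hi => ?_, fun i j hj₁ hji hi h₁ h₂ => ?_, fun i j hj₁ hji hi => ?_⟩
  all_goals obtain ⟨j, rfl⟩ := Nat.exists_eq_add_of_le' hj₁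
  · exact (h i hi).mem_uIcc ⟨j, hji⟩
  · exact (h i hi).lt_of_le_of_le ⟨j, by omega⟩ ⟨j + 1, hji⟩ rfl h₁ h₂
  · refine ⟨fun he hd => ?_, fun hd he => ?_⟩
    · obtain ⟨j', hj', hl⟩ := (h i hi).exists_eq_left ⟨j, hji⟩ hd he
      obtain rfl : j' + 1 = j := congrArg Fin.val hj'
      exact ⟨by omega, hl⟩
    · obtain ⟨⟨j', hj'i⟩, hj', hl⟩ := (h i hi).exists_eq_right ⟨j, hji⟩ hd he.symm
      obtain rfl : j + 1 = j' := congrArg Fin.val hj'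
      exact ⟨hj'i, hl⟩

theorem IsGMT.noThreeEq_row (h : IsGMT n a) : NoThreeEq (row a n) := by
  cases n with
  | zero => exact fun i => i.elim0
  | succ n => exact (h.interlaces_row le_rfl).noThreeEq

theorem row_update_of_ne {i : ℕ} (hi : i ≠ n) (r : ℕ → ℤ) : row (update a n r) i = row a i := by
  unfold row
  rw [update_of_ne hi]

theorem IsGMT.update_zero (h : IsGMT (N + 1) a) : IsGMT N (update a (N + 1) 0) := by
  refine isGMT_of_interlaces_row (fun i j hij => ?_) fun i hi => ?_
  · by_cases hi : i = N + 1
    · rw [hi, update_self, Pi.zero_apply]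
    · rw [update_of_ne hi]
      exact h.1 i j (by omega)
  · rw [row_update_of_ne (by omega), row_update_of_ne (by omega)]
    exact h.interlaces_row (by omega)

theorem rowExt_apply (l : Fin n → ℤ) (j : Fin n) : rowExt l j = l j :=
  dif_pos j.2

/-- The triangular array `a` with its row `n` replaced by `k`; column `0` lies outside the triangle
and is set to `0`, as `IsTri` requires. -/
def withRow (a : ℕ → ℕ → ℤ) (k : Fin n → ℤ) : ℕ → ℕ → ℤ :=
  update a n fun
    | 0 => 0
    | j + 1 => rowExt k j

theorem row_withRow_self (k : Fin n → ℤ) : row (withRow a k) n = k := by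
  ext j
  simp only [row, withRow, update_self, rowExt_apply]

theorem isTri_withRow (ha : IsTri N a) (k : Fin (N + 1) → ℤ) : IsTri (N + 1) (withRow a k) := by
  intro i j hij
  by_cases hi : i = N + 1
  · subst hi
    rw [withRow, update_self]
    cases j with
    | zero => rfl
    | succ j => exact dif_neg (by omega)
  · rw [withRow, update_of_ne hi]
    exact ha i j (by omega)

theorem isGMT_withRow (h : IsGMT N a) {k : Fin (N + 1) → ℤ} (hk : Interlaces_s14 k (row a N)) :
    IsGMT (N + 1) (withRow a k) := by
  refine isGMT_of_interlaces_row (isTri_withRow h.1 k) fun i hi => ?_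
  have hrow : row (withRow a k) i = row a i := row_update_of_ne (by omega) _
  obtain rfl | hi := (Nat.le_of_succ_le_succ hi).eq_or_lt
  · rwa [row_withRow_self, hrow]
  · rw [hrow, withRow, row_update_of_ne (by omega)]
    exact h.interlaces_row hi

variable {k : Fin (N + 1) → ℤ} {l : Fin N → ℤ} {p : Fin N}

theorem mem_penSet_iff : l ∈ PenSet N k ↔ (GMTset N l).Nonempty ∧ Interlaces_s14 k l := by
  constructor
  · rintro ⟨a, ha, hk, hl⟩
    refine ⟨⟨update a (N + 1) 0, ha.update_zero, ?_⟩, ?_⟩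
    · rw [bottomRow_iff_row_eq, row_update_of_ne (by omega)]
      exact funext hl
    · rw [← bottomRow_iff_row_eq.1 hk, ← bottomRow_iff_row_eq.1 hl]
      exact ha.interlaces_row le_rfl
  · rintro ⟨⟨a, ha, hl⟩, h⟩
    rw [bottomRow_iff_row_eq] at hl
    subst hl
    refine ⟨withRow a k, isGMT_withRow ha h, bottomRow_iff_row_eq.2 (row_withRow_self k), ?_⟩
    exact bottomRow_iff_row_eq.2 (row_update_of_ne (by omega) _)

theorem noThreeEq_of_gmtSet_nonempty {l : Fin n → ℤ} (hl : (GMTset n l).Nonempty) :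
    NoThreeEq l := by
  obtain ⟨a, ha, hrow⟩ := hl
  exact bottomRow_iff_row_eq.1 hrow ▸ ha.noThreeEq_row

theorem mem_penSet_update_succ_iff (hp : k p.castSucc ⋖ k p.succ) :
    l ∈ PenSet N (update k p.succ (k p.castSucc)) ↔ l ∈ PenSet N k ∧ l p = k p.castSucc := by
  rw [mem_penSet_iff, mem_penSet_iff, and_assoc]
  exact and_congr_right fun hl => interlaces_update_succ_iff (noThreeEq_of_gmtSet_nonempty hl) hp

theorem mem_penSet_update_castSucc_iff (hp : k p.castSucc ⋖ k p.succ) :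
    l ∈ PenSet N (update k p.castSucc (k p.succ)) ↔ l ∈ PenSet N k ∧ l p = k p.succ := by
  rw [mem_penSet_iff, mem_penSet_iff, and_assoc]
  exact and_congr_right fun hl =>
    interlaces_update_castSucc_iff (noThreeEq_of_gmtSet_nonempty hl) hp

theorem penSet_eq_union_update (hp : k p.castSucc ⋖ k p.succ) :
    PenSet N k = PenSet N (update k p.succ (k p.castSucc)) ∪
      PenSet N (update k p.castSucc (k p.succ)) := by
  ext l
  rw [Set.mem_union, mem_penSet_update_succ_iff hp, mem_penSet_update_castSucc_iff hp,
    ← and_or_left]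
  exact (and_iff_left_of_imp fun hl => (mem_penSet_iff.1 hl).2.eq_or_eq_of_covBy hp).symm

theorem disjoint_penSet_update (hp : k p.castSucc ⋖ k p.succ) :
    Disjoint (PenSet N (update k p.succ (k p.castSucc)))
      (PenSet N (update k p.castSucc (k p.succ))) := by
  rw [Set.disjoint_left]
  intro l hl hr
  rw [mem_penSet_update_succ_iff hp] at hl
  rw [mem_penSet_update_castSucc_iff hp] at hr
  exact hp.ne (hl.2.symm.trans hr.2)

theorem card_filter_range (P : ℕ → Prop) [DecidablePred P] :
    #{j ∈ range n | P j} = #{j : Fin n | P j} := by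
  rw [card_filter, card_filter, Fin.sum_univ_eq_sum_range fun j => if P j then 1 else 0]

theorem sc2_eq_card_newcomers_add_card_signChanges :
    sc2 N k l = #(newcomers k l) + #(signChanges k l) := by
  rw [sc2, card_filter_range, card_filter_range]
  congr 1
  · congr 1
    ext j
    have hsucc : rowExt k (j + 1) = k j.succ := rowExt_apply k j.succ
    have hcast : rowExt k j = k j.castSucc := rowExt_apply k j.castSucc
    rw [newcomers, mem_filter_univ, mem_filter_univ, rowExt_apply l, hsucc, hcast, and_comm]
  · rw [← card_map (Fin.succEmb N)]
    congr 1
    ext q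
    cases q using Fin.cases with
    | zero => simp [signChanges]
    | succ i =>
      have hsucc : rowExt k (i + 1) = k i.succ := rowExt_apply k i.succ
      rw [succ_mem_signChanges_iff, ← Fin.coe_succEmb, mem_map', mem_filter_univ, rowExt_apply l,
        hsucc]
      constructor
      · rintro ⟨hi, hl, hk⟩
        rw [rowExt_apply l ⟨i + 1, hi⟩] at hl
        exact ⟨⟨i + 1, hi⟩, rfl, hk.symm, hl.symm.trans hk.symm⟩
      · rintro ⟨⟨j, hjN⟩, hj, hi, hj'⟩
        obtain rfl : i + 1 = j := congrArg Fin.val hj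
        exact ⟨hjN, (hi.trans hj'.symm).trans (rowExt_apply l ⟨i + 1, hjN⟩).symm, hi.symm⟩

theorem sc2_update_succ (hp : k p.castSucc ⋖ k p.succ)
    (hl : l ∈ PenSet N (update k p.succ (k p.castSucc))) :
    sc2 N k l = sc2 N (update k p.succ (k p.castSucc)) l := by
  simp only [sc2_eq_card_newcomers_add_card_signChanges]
  exact card_newcomers_add_card_signChanges_update_succ hp (mem_penSet_iff.1 hl).2

theorem sc2_update_castSucc (hp : k p.castSucc ⋖ k p.succ)
    (hl : l ∈ PenSet N (update k p.castSucc (k p.succ))) :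
    sc2 N k l = sc2 N (update k p.castSucc (k p.succ)) l := by
  simp only [sc2_eq_card_newcomers_add_card_signChanges]
  exact card_newcomers_add_card_signChanges_update_castSucc hp (mem_penSet_iff.1 hl).2

end Triangles

/-- For `n = N + 1 ≥ 2`, every (0-indexed) position `p` with `p < N`, and all
integers `k₁,…` and `m`: the set of penultimate rows
`𝒫(…, m, m+1, …)` is the disjoint union of `𝒫(…, m, m, …)` and
`𝒫(…, m+1, m+1, …)`, and each row has the same total number of newcomers and
sign-changing pairs with respect to `(…, m, m+1, …)` as with respect to the
bottom row of the part containing it. -/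
theorem penSet_pair_identity (N : ℕ) (hN : 1 ≤ N) (p : ℕ) (hp : p < N)
    (k : Fin (N + 1) → ℤ) (m : ℤ) :
    (PenSet N (fun j => if j.1 = p then m else if j.1 = p + 1 then m + 1 else k j) =
      PenSet N (fun j => if j.1 = p then m else if j.1 = p + 1 then m else k j) ∪
      PenSet N (fun j => if j.1 = p then m + 1 else if j.1 = p + 1 then m + 1 else k j)) ∧
    Disjoint
      (PenSet N (fun j => if j.1 = p then m else if j.1 = p + 1 then m else k j))
      (PenSet N (fun j => if j.1 = p then m + 1 else if j.1 = p + 1 then m + 1 else k j)) ∧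
    (∀ l ∈ PenSet N (fun j => if j.1 = p then m else if j.1 = p + 1 then m else k j),
      sc2 N (fun j => if j.1 = p then m else if j.1 = p + 1 then m + 1 else k j) l =
        sc2 N (fun j => if j.1 = p then m else if j.1 = p + 1 then m else k j) l) ∧
    (∀ l ∈ PenSet N (fun j => if j.1 = p then m + 1 else if j.1 = p + 1 then m + 1 else k j),
      sc2 N (fun j => if j.1 = p then m else if j.1 = p + 1 then m + 1 else k j) l =
        sc2 N (fun j => if j.1 = p then m + 1 else if j.1 = p + 1 then m + 1 else k j) l) := by
  lift p to Fin N using hp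
  rw [ite_eq_update_update, ite_eq_update_update, ite_eq_update_update]
  set r := Function.update (Function.update k p.succ (m + 1)) p.castSucc m with hr
  have hne : p.castSucc ≠ p.succ := Fin.castSucc_lt_succ.ne
  have hcast : r p.castSucc = m := Function.update_self ..
  have hsucc : r p.succ = m + 1 := by rw [hr, Function.update_of_ne hne.symm, Function.update_self]
  have hcov : r p.castSucc ⋖ r p.succ := by
    rw [hcast, hsucc]
    exact Order.covBy_add_one m
  have hleft : Function.update (Function.update k p.succ m) p.castSucc m =
      Function.update r p.succ (r p.castSucc) := by
    rw [hcast, hr, Function.update_comm hne, Function.update_idem]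
  have hright : Function.update (Function.update k p.succ (m + 1)) p.castSucc (m + 1) =
      Function.update r p.castSucc (r p.succ) := by
    rw [hsucc, hr, Function.update_idem]
  rw [hleft, hright]
  exact ⟨penSet_eq_union_update hcov, disjoint_penSet_update hcov, fun _ => sc2_update_succ hcov,
    fun _ => sc2_update_castSucc hcov⟩
end

section
/- For every n ≥ 2, α(n+1; 2, 1, 2, 3, …, n) = −Σ_{p=2}^{n} α(n; 1, 1, 2, …, p−1, p+1, …, n), where the argument of the p-th summand is the sequence of length n obtained from (1,1,2,3,…,n) by deleting the entry p. -/
/-!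
Prefix a strictly increasing row `k` by an integer `x < k 0`. A row that may stand above `(x, k)`
either starts with `x`, and then its tail is any row above `k`, or it may also stand above
`(x + 1, k)`. Counting by penultimate rows turns this into
`α(n+1; x, k) = ∑_l α(n; x, l) + α(n+1; x+1, k)`, the sum running over the rows `l` above `k`; both
sides are polynomials in `x`, so the identity holds for every integer `x`.

At `x = k 0 - 1`, where the left side still counts triangles, it shows that `α(n+1; k 0, k)` is
the sum of `α(n; k 0, l)` over the rows `l` that avoid `k 0`. At `x = k 0` it then expresses
`α(n+1; k 0 + 1, k)` as minus the sum over the rows `l` that contain `k 0`. For `k = (1, …, n)`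
these are the rows obtained by deleting an entry `p ≥ 2`.
-/

open Classical in
/-- The strictly increasing rows that may stand directly above the row `k`. -/
noncomputable def interlacingRows {n : ℕ} (k : Fin (n + 1) → ℤ) : Finset (Fin n → ℤ) :=
  {l ∈ Finset.Icc (Fin.init k) (Fin.tail k) | StrictMono l}

theorem strictMono_cons_of_lt {α : Type*} [Preorder α] {n : ℕ} {k : Fin (n + 1) → α} {x : α}
    (hk : StrictMono k) (hx : x < k 0) : StrictMono (Fin.cons x k : Fin (n + 2) → α) :=
  Fin.strictMono_cons.2 ⟨fun _ => hx.trans_le (hk.monotone (Fin.zero_le _)), hk⟩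

section InterlacingRows

variable {n : ℕ} {k : Fin (n + 1) → ℤ} {l : Fin n → ℤ} {x y : ℤ}

theorem mem_interlacingRows :
    l ∈ interlacingRows k ↔ (∀ j, k j.castSucc ≤ l j ∧ l j ≤ k j.succ) ∧ StrictMono l := by
  simp [interlacingRows, Pi.le_def, Fin.init, Fin.tail, forall_and]

theorem cons_mem_interlacingRows_cons :
    (Fin.cons y l : Fin (n + 1) → ℤ) ∈ interlacingRows (Fin.cons x k : Fin (n + 2) → ℤ) ↔
      (x ≤ y ∧ y ≤ k 0) ∧ (∀ j, y < l j) ∧ l ∈ interlacingRows k := by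
  simp only [mem_interlacingRows, Fin.forall_fin_succ (n := n), Fin.strictMono_cons,
    Fin.castSucc_zero, Fin.castSucc_succ, Fin.cons_zero, Fin.cons_succ]
  tauto

theorem le_of_mem_interlacingRows (hk : Monotone k) (hl : l ∈ interlacingRows k) (j : Fin n) :
    k 0 ≤ l j :=
  (hk (Fin.zero_le _)).trans ((mem_interlacingRows.1 hl).1 j).1

theorem interlacingRows_cons_of_lt (hk : Monotone k) (hx : x < k 0) :
    interlacingRows (Fin.cons x k : Fin (n + 2) → ℤ) =
      (interlacingRows k).image (Fin.cons x) ∪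
        interlacingRows (Fin.cons (x + 1) k : Fin (n + 2) → ℤ) := by
  ext l
  induction l using Fin.consCases with | _ y l
  have hbelow : l ∈ interlacingRows k → ∀ j, x < l j := fun hl j =>
    hx.trans_le (le_of_mem_interlacingRows hk hl j)
  simp only [Finset.mem_union, Finset.mem_image, cons_mem_interlacingRows_cons, Fin.cons_inj]
  grind

theorem interlacingRows_cons_head (hk : Monotone k) :
    interlacingRows (Fin.cons (k 0) k : Fin (n + 2) → ℤ) =
      {l ∈ interlacingRows k | ¬ ∃ j, l j = k 0}.image (Fin.cons (k 0)) := by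
  ext l
  induction l using Fin.consCases with | _ y l
  simp only [Finset.mem_image, Finset.mem_filter, cons_mem_interlacingRows_cons, Fin.cons_inj]
  constructor
  · rintro ⟨⟨h₁, h₂⟩, hlt, hl⟩
    obtain rfl := h₁.antisymm h₂
    exact ⟨l, ⟨hl, fun ⟨j, hj⟩ => (hlt j).ne' hj⟩, rfl, rfl⟩
  · rintro ⟨_, ⟨hl, hne⟩, rfl, rfl⟩
    exact ⟨⟨le_rfl, le_rfl⟩, fun j =>
      (le_of_mem_interlacingRows hk hl j).lt_of_ne fun hj => hne ⟨j, hj.symm⟩, hl⟩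

variable {M : Type*} [AddCommMonoid M] (f : (Fin (n + 1) → ℤ) → M)

theorem sum_interlacingRows_cons_of_lt (hk : Monotone k) (hx : x < k 0) :
    ∑ l ∈ interlacingRows (Fin.cons x k : Fin (n + 2) → ℤ), f l =
      ∑ l ∈ interlacingRows k, f (Fin.cons x l) +
        ∑ l ∈ interlacingRows (Fin.cons (x + 1) k : Fin (n + 2) → ℤ), f l := by
  have hdisj : Disjoint ((interlacingRows k).image (Fin.cons x))
      (interlacingRows (Fin.cons (x + 1) k : Fin (n + 2) → ℤ)) := by
    simp [Finset.disjoint_left, cons_mem_interlacingRows_cons]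
  rw [interlacingRows_cons_of_lt hk hx, Finset.sum_union hdisj,
    Finset.sum_image (Fin.cons_right_injective (α := fun _ => ℤ) x).injOn]

theorem sum_interlacingRows_cons_head (hk : Monotone k) :
    ∑ l ∈ interlacingRows (Fin.cons (k 0) k : Fin (n + 2) → ℤ), f l =
      ∑ l ∈ interlacingRows k with ¬ ∃ j, l j = k 0, f (Fin.cons (k 0) l) := by
  rw [interlacingRows_cons_head hk,
    Finset.sum_image (Fin.cons_right_injective (α := fun _ => ℤ) _).injOn]

end InterlacingRows

section ConsecutiveIntegers

theorem exists_removeNth_eq_of_range_subset {α : Type*} [LinearOrder α] {n : ℕ}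
    {k : Fin (n + 1) → α} {l : Fin n → α} (hk : StrictMono k) (hl : StrictMono l)
    (h : Set.range l ⊆ Set.range k) : ∃ p : Fin (n + 1), p.removeNth k = l := by
  choose g hg using fun j => h (Set.mem_range_self j)
  have hg_mono : StrictMono g := fun i j hij => hk.lt_iff_lt.1 (by simpa only [hg] using hl hij)
  obtain ⟨p, hp⟩ : ∃ p, ∀ j, g j ≠ p := by
    by_contra! hsurj
    simpa using Fintype.card_le_of_surjective g hsurj
  have hgp : g = p.succAbove := by
    have := Finset.orderEmbOfFin_unique (s := {p}ᶜ) (by simp [Finset.card_compl])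
      (fun j => by simpa using hp j) hg_mono
    rw [this, Finset.orderEmbOfFin_compl_singleton_eq_succAboveOrderEmb]
    rfl
  refine ⟨p, funext fun j => ?_⟩
  rw [← hg, hgp, Fin.removeNth]

theorem removeNth_injective {α : Type*} {n : ℕ} {k : Fin (n + 1) → α}
    (hk : Function.Injective k) : Function.Injective fun p : Fin (n + 1) => p.removeNth k :=
  fun _ _ h => Fin.succAbove_left_injective (hk.comp_left h)

theorem exists_removeNth_apply_eq_iff {α : Type*} {n : ℕ} {k : Fin (n + 1) → α}
    (hk : Function.Injective k) {p i : Fin (n + 1)} : (∃ j, p.removeNth k j = k i) ↔ p ≠ i := by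
  simp only [Fin.removeNth, hk.eq_iff, Fin.exists_succAbove_eq_iff, ne_comm]

variable {n : ℕ} {k : Fin (n + 1) → ℤ}

theorem strictMono_of_succ_eq_add_one (hk : ∀ j : Fin n, k j.succ = k j.castSucc + 1) :
    StrictMono k :=
  Fin.strictMono_iff_lt_succ.2 fun j => hk j ▸ lt_add_one _

theorem removeNth_mem_interlacingRows (hk : StrictMono k) (p : Fin (n + 1)) :
    p.removeNth k ∈ interlacingRows k := by
  refine mem_interlacingRows.2 ⟨fun j => ?_, hk.removeNth p⟩
  rw [Fin.removeNth, hk.le_iff_le, hk.le_iff_le, Fin.succAbove]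
  split_ifs
  exacts [⟨le_rfl, Fin.castSucc_le_succ j⟩, ⟨Fin.castSucc_le_succ j, le_rfl⟩]

theorem interlacingRows_eq_image_removeNth (hk : ∀ j : Fin n, k j.succ = k j.castSucc + 1) :
    interlacingRows k = Finset.univ.image fun p : Fin (n + 1) => p.removeNth k := by
  have hk_mono := strictMono_of_succ_eq_add_one hk
  ext l
  simp only [Finset.mem_image, Finset.mem_univ, true_and]
  constructor
  · intro hl
    obtain ⟨hinter, hl_mono⟩ := mem_interlacingRows.1 hl
    refine exists_removeNth_eq_of_range_subset hk_mono hl_mono ?_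
    rintro _ ⟨j, rfl⟩
    obtain h | h : k j.castSucc = l j ∨ k j.succ = l j := by grind
    exacts [⟨_, h⟩, ⟨_, h⟩]
  · rintro ⟨p, rfl⟩
    exact removeNth_mem_interlacingRows hk_mono p

theorem sum_interlacingRows_exists_eq_head {M : Type*} [AddCommMonoid M]
    (hk : ∀ j : Fin n, k j.succ = k j.castSucc + 1) (f : (Fin n → ℤ) → M) :
    ∑ l ∈ interlacingRows k with ∃ j, l j = k 0, f l = ∑ p : Fin n, f (p.succ.removeNth k) := by
  have hk_inj := (strictMono_of_succ_eq_add_one hk).injective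
  rw [Finset.sum_filter, interlacingRows_eq_image_removeNth hk,
    Finset.sum_image (removeNth_injective hk_inj).injOn, Fin.sum_univ_succ]
  simp only [exists_removeNth_apply_eq_iff hk_inj, ne_eq, not_true, if_false, zero_add,
    Fin.succ_ne_zero, not_false_eq_true, if_true]

theorem sum_interlacingRows_one_to_succ {M : Type*} [AddCommMonoid M]
    (f : (Fin (n + 1) → ℤ) → M) :
    ∑ l ∈ interlacingRows (fun j : Fin (n + 1) => (j : ℤ) + 1) with ∃ j, l j = 1,
      f (Fin.cons 1 l) =
    ∑ p ∈ Finset.Icc 2 (n + 1), f (fun j => if j.1 = 0 then 1 else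
      if j.1 < p then (j.1 : ℤ) else (j.1 : ℤ) + 1) := by
  have := sum_interlacingRows_exists_eq_head (k := fun j : Fin (n + 1) => (j : ℤ) + 1)
    (by simp) fun l => f (Fin.cons 1 l)
  simp only [Fin.val_zero, Nat.cast_zero, zero_add] at this
  rw [this, ← Finset.Ico_add_one_right_eq_Icc, Finset.sum_Ico_eq_sum_range, Finset.sum_range]
  refine Finset.sum_congr rfl fun p _ => congrArg f (funext fun j => ?_)
  cases j using Fin.cases with
  | zero => rfl
  | succ j =>
    simp only [Fin.cons_succ, Fin.removeNth, Fin.succAbove, Fin.lt_def]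
    grind

end ConsecutiveIntegers

section MonotoneTriangles

variable {n : ℕ} {k : Fin (n + 1) → ℤ} {l : Fin n → ℤ} {a b : ℕ → ℕ → ℤ}

/-- The triangular array of size `n + 1` with bottom row `k` whose first `n` rows are those
of `a`. Positions are 1-indexed and entries beyond the bottom row are `0`, as `IsTri` requires. -/
noncomputable def appendRow (k : Fin (n + 1) → ℤ) (a : ℕ → ℕ → ℤ) : ℕ → ℕ → ℤ :=
  Function.update a (n + 1) (Function.extend (fun j : Fin (n + 1) => (j : ℕ) + 1) k 0)

theorem appendRow_of_ne {i : ℕ} (hi : i ≠ n + 1) : appendRow k a i = a i :=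
  Function.update_of_ne hi _ _

theorem appendRow_last (j : Fin (n + 1)) : appendRow k a (n + 1) (j + 1) = k j := by
  have hinj : Function.Injective fun j : Fin (n + 1) => (j : ℕ) + 1 :=
    (add_left_injective 1).comp Fin.val_injective
  rw [appendRow, Function.update_self]
  exact hinj.extend_apply k 0 j

theorem appendRow_last_eq_zero {j : ℕ} (hj : ¬ (1 ≤ j ∧ j ≤ n + 1)) :
    appendRow k a (n + 1) j = 0 := by
  rw [appendRow, Function.update_self, Function.extend_apply']
  · rfl
  · rintro ⟨j, rfl⟩
    omega

theorem isTri_appendRow (ha : IsTri n a) : IsTri (n + 1) (appendRow k a) := by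
  intro i j h
  rcases eq_or_ne i (n + 1) with rfl | hi
  · exact appendRow_last_eq_zero (by omega)
  · rw [appendRow_of_ne hi]
    exact ha i j (by omega)

theorem appendRow_mem_MTset (hk : StrictMono k) (hl : l ∈ interlacingRows k)
    (ha : a ∈ MTset n l) : appendRow k a ∈ MTset (n + 1) k := by
  obtain ⟨⟨htri, hrow, hdiag⟩, hbot⟩ := ha
  refine ⟨⟨isTri_appendRow htri, fun i j h₁ h₂ h₃ => ?_, fun i j h₁ h₂ h₃ => ?_⟩,
    appendRow_last⟩
  all_goals obtain ⟨j, rfl⟩ := Nat.exists_eq_add_of_le' h₁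
  · rcases eq_or_ne i (n + 1) with rfl | hi
    · have hlt := hk (Fin.castSucc_lt_succ (i := ⟨j, by omega⟩))
      rwa [← appendRow_last (k := k) (a := a), ← appendRow_last (k := k) (a := a)] at hlt
    · rw [appendRow_of_ne hi]
      exact hrow i _ h₁ h₂ (by omega)
  · rw [appendRow_of_ne (i := i) (by omega)]
    rcases eq_or_ne i n with rfl | hi
    · have hj := (mem_interlacingRows.1 hl).1 ⟨j, h₂⟩
      rwa [← hbot, ← appendRow_last (k := k) (a := a), ← appendRow_last (k := k) (a := a)] at hj
    · rw [appendRow_of_ne (by omega)]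
      exact hdiag i _ h₁ h₂ (by omega)

theorem appendRow_update_zero (hb : IsTri (n + 1) b) (hbk : BottomRow (n + 1) b k) :
    appendRow k (Function.update b (n + 1) 0) = b := by
  funext i j
  rcases eq_or_ne i (n + 1) with rfl | hi
  · by_cases hj : 1 ≤ j ∧ j ≤ n + 1
    · obtain ⟨j, rfl⟩ := Nat.exists_eq_add_of_le' hj.1
      exact (appendRow_last ⟨j, by omega⟩).trans (hbk ⟨j, by omega⟩).symm
    · rw [appendRow_last_eq_zero hj, hb _ _ (by omega)]
  · rw [appendRow_of_ne hi, Function.update_of_ne hi]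

theorem IsMT.update_zero (hb : IsMT (n + 1) b) : IsMT n (Function.update b (n + 1) 0) := by
  obtain ⟨htri, hrow, hdiag⟩ := hb
  refine ⟨fun i j h => ?_, fun i j h₁ h₂ h₃ => ?_, fun i j h₁ h₂ h₃ => ?_⟩
  · rcases eq_or_ne i (n + 1) with rfl | hi
    · simp
    · rw [Function.update_of_ne hi]
      exact htri i j (by omega)
  · rw [Function.update_of_ne (by omega)]
    exact hrow i j h₁ h₂ (by omega)
  · rw [Function.update_of_ne (by omega), Function.update_of_ne (by omega)]
    exact hdiag i j h₁ h₂ (by omega)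

theorem IsMT.penultimateRow_mem_interlacingRows (hb : IsMT (n + 1) b)
    (hbk : BottomRow (n + 1) b k) : (fun j : Fin n => b n (j + 1)) ∈ interlacingRows k := by
  obtain ⟨-, hrow, hdiag⟩ := hb
  refine mem_interlacingRows.2 ⟨fun j => ?_, ?_⟩
  · rw [← hbk, ← hbk]
    exact hdiag n (j + 1) (by omega) (by omega) (by omega)
  · cases n with
    | zero => exact Subsingleton.strictMono _
    | succ n =>
      exact Fin.strictMono_iff_lt_succ.2 fun j =>
        hrow (n + 1) (j + 1) (by omega) (by omega) (by omega)

theorem MTset_succ_subset :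
    MTset (n + 1) k ⊆ ⋃ l ∈ interlacingRows k, appendRow k '' MTset n l := by
  rintro b ⟨hb, hbk⟩
  have hbot : BottomRow n (Function.update b (n + 1) 0) fun j => b n (j + 1) := fun j => by
    rw [Function.update_of_ne (by omega)]
  exact Set.mem_biUnion (hb.penultimateRow_mem_interlacingRows hbk)
    ⟨_, ⟨hb.update_zero, hbot⟩, appendRow_update_zero hb.1 hbk⟩

theorem MTset_succ (hk : StrictMono k) :
    MTset (n + 1) k = ⋃ l ∈ interlacingRows k, appendRow k '' MTset n l :=
  MTset_succ_subset.antisymm <| Set.iUnion₂_subset fun _ hl =>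
    Set.image_subset_iff.2 fun _ ha => appendRow_mem_MTset hk hl ha

theorem finite_MTset (n : ℕ) (k : Fin n → ℤ) : (MTset n k).Finite := by
  induction n with
  | zero =>
    refine (Set.finite_singleton (0 : ℕ → ℕ → ℤ)).subset fun a ha => ?_
    funext i j
    exact ha.1.1 i j (by omega)
  | succ n ih =>
    exact ((interlacingRows k).finite_toSet.biUnion fun l _ => (ih l).image _).subset
      MTset_succ_subset

theorem injOn_appendRow : Set.InjOn (appendRow k) {a | IsTri n a} := by
  intro a ha b hb h
  funext i j
  rcases eq_or_ne i (n + 1) with rfl | hi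
  · rw [ha _ j (by omega), hb _ j (by omega)]
  · rw [← appendRow_of_ne (k := k) (a := a) hi, h, appendRow_of_ne hi]

theorem ncard_MTset_succ (hk : StrictMono k) :
    (MTset (n + 1) k).ncard = ∑ l ∈ interlacingRows k, (MTset n l).ncard := by
  have hdisj : (interlacingRows k : Set (Fin n → ℤ)).PairwiseDisjoint
      fun l => appendRow k '' MTset n l := by
    intro l _ l' _ hne
    refine Set.disjoint_left.2 ?_
    rintro _ ⟨a, ha, rfl⟩ ⟨b, hb, hab⟩
    obtain rfl := injOn_appendRow hb.1.1 ha.1.1 hab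
    exact hne (funext fun j => (ha.2 j).symm.trans (hb.2 j))
  have hncard := (interlacingRows k).finite_toSet.ncard_biUnion
    (fun l _ => (finite_MTset n l).image (appendRow k)) hdisj
  rw [finsum_mem_coe_finset] at hncard
  rw [MTset_succ hk]
  refine hncard.trans (Finset.sum_congr rfl fun l _ => Set.InjOn.ncard_image ?_)
  exact injOn_appendRow.mono fun _ ha => ha.1.1

end MonotoneTriangles

section Alpha

theorem polynomial_eq_of_forall_int_lt {R : Type*} [CommRing R] [IsDomain R] [CharZero R]
    {F G : Polynomial R} (c : ℤ) (h : ∀ x : ℤ, x < c → F.eval (x : R) = G.eval (x : R)) :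
    F = G := by
  refine Polynomial.eq_of_infinite_eval_eq F G
    (((Set.Iio_infinite c).image Int.cast_injective.injOn).mono ?_)
  rintro _ ⟨x, hx, rfl⟩
  exact h x hx

theorem IsAlpha.exists_polynomial_cons {n : ℕ} {α : (Fin (n + 1) → ℤ) → ℚ}
    (hα : IsAlpha (n + 1) α) (k : Fin n → ℤ) :
    ∃ F : Polynomial ℚ, ∀ x : ℤ, α (Fin.cons x k) = F.eval (x : ℚ) := by
  obtain ⟨⟨P, -, hP⟩, -⟩ := hα
  refine ⟨(MvPolynomial.finSuccEquiv ℚ n P).map (MvPolynomial.eval fun j => (k j : ℚ)),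
    fun x => ?_⟩
  rw [hP, ← MvPolynomial.eval_eq_eval_mv_eval']
  congr 2 with j
  cases j using Fin.cases <;> simp

theorem IsAlpha.apply_eq_sum_interlacingRows {n : ℕ} {α₁ : (Fin (n + 1) → ℤ) → ℚ}
    {α₂ : (Fin n → ℤ) → ℚ} (hα₁ : IsAlpha (n + 1) α₁) (hα₂ : IsAlpha n α₂)
    {k : Fin (n + 1) → ℤ} (hk : StrictMono k) : α₁ k = ∑ l ∈ interlacingRows k, α₂ l := by
  rw [hα₁.2 k hk, ncard_MTset_succ hk, Nat.cast_sum]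
  exact Finset.sum_congr rfl fun l hl => (hα₂.2 l (mem_interlacingRows.1 hl).2).symm

variable {n : ℕ} {α₁ : (Fin (n + 2) → ℤ) → ℚ} {α₂ : (Fin (n + 1) → ℤ) → ℚ}
  {k : Fin (n + 1) → ℤ}

theorem IsAlpha.apply_cons (hα₁ : IsAlpha (n + 2) α₁) (hα₂ : IsAlpha (n + 1) α₂)
    (hk : StrictMono k) (x : ℤ) :
    α₁ (Fin.cons x k) =
      ∑ l ∈ interlacingRows k, α₂ (Fin.cons x l) + α₁ (Fin.cons (x + 1) k) := by
  obtain ⟨F, hF⟩ := hα₁.exists_polynomial_cons k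
  choose G hG using hα₂.exists_polynomial_cons
  have hFG : F = ∑ l ∈ interlacingRows k, G l + F.comp (Polynomial.X + 1) := by
    refine polynomial_eq_of_forall_int_lt (k 0 - 1) fun x hx => ?_
    have hrec : α₁ (Fin.cons x k) =
        ∑ l ∈ interlacingRows k, α₂ (Fin.cons x l) + α₁ (Fin.cons (x + 1) k) := by
      rw [hα₁.apply_eq_sum_interlacingRows hα₂ (strictMono_cons_of_lt hk (by omega)),
        hα₁.apply_eq_sum_interlacingRows hα₂ (strictMono_cons_of_lt hk (by omega)),
        sum_interlacingRows_cons_of_lt α₂ hk.monotone (by omega)]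
    simpa [hF, hG, Polynomial.eval_finsetSum] using hrec
  simpa [hF, hG, Polynomial.eval_finsetSum] using congrArg (Polynomial.eval (x : ℚ)) hFG

theorem IsAlpha.apply_cons_head (hα₁ : IsAlpha (n + 2) α₁) (hα₂ : IsAlpha (n + 1) α₂)
    (hk : StrictMono k) :
    α₁ (Fin.cons (k 0) k) =
      ∑ l ∈ interlacingRows k with ¬ ∃ j, l j = k 0, α₂ (Fin.cons (k 0) l) := by
  have hlt : k 0 - 1 < k 0 := sub_one_lt _
  have hstep := hα₁.apply_cons hα₂ hk (k 0 - 1)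
  rw [hα₁.apply_eq_sum_interlacingRows hα₂ (strictMono_cons_of_lt hk hlt),
    sum_interlacingRows_cons_of_lt α₂ hk.monotone hlt, sub_add_cancel,
    sum_interlacingRows_cons_head α₂ hk.monotone] at hstep
  exact (add_left_cancel hstep).symm

theorem alpha_2123n_general (hα₁ : IsAlpha (n + 2) α₁) (hα₂ : IsAlpha (n + 1) α₂)
    (hk : StrictMono k) :
    α₁ (Fin.cons (k 0 + 1) k) =
      -∑ l ∈ interlacingRows k with ∃ j, l j = k 0, α₂ (Fin.cons (k 0) l) := by
  have hstep := hα₁.apply_cons hα₂ hk (k 0)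
  rw [hα₁.apply_cons_head hα₂ hk,
    ← Finset.sum_filter_add_sum_filter_not (interlacingRows k) (fun l => ∃ j, l j = k 0)] at hstep
  linarith

end Alpha

/-- For every `n ≥ 2`,
`α(n+1; 2,1,2,3,…,n) = -Σ_{p=2}^{n} α(n; 1,1,2,…,p-1,p+1,…,n)`,
where the `p`-th summand's argument is `(1,1,2,…,n)` with the entry `p`
deleted. -/
theorem alpha_2123n (n : ℕ) (hn : 2 ≤ n)
    (α1 : (Fin (n + 1) → ℤ) → ℚ) (hα1 : IsAlpha (n + 1) α1)
    (α2 : (Fin n → ℤ) → ℚ) (hα2 : IsAlpha n α2) :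
    α1 (fun j => if j.1 = 0 then 2 else (j.1 : ℤ)) =
      - ∑ p ∈ Finset.Icc 2 n,
          α2 (fun j => if j.1 = 0 then 1 else
            if j.1 < p then (j.1 : ℤ) else (j.1 : ℤ) + 1) := by
  obtain ⟨m, rfl⟩ := Nat.exists_eq_add_of_le' (one_le_two.trans hn)
  have hk : StrictMono fun j : Fin (m + 1) => (j : ℤ) + 1 :=
    strictMono_of_succ_eq_add_one (by simp)
  rw [← sum_interlacingRows_one_to_succ]
  convert alpha_2123n_general hα1 hα2 hk using 2
  · funext j
    cases j using Fin.cases <;> simp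
  · simp
end
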